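/- arXiv:1204.3197 — 3 statements merged into one kernel-verified Lean document; each statement's English description precedes it below -/
import Mathlib

section
/- Let L ≥ 2 and M ≥ 3(L+1) be integers, let ψ ∈ Ψ_M (M-spaced), and let ζ(L) be the hierarchical weighted word. Then the percolation configuration ω_{ζ(L),ψ} has an infinite open permitted path starting from the origin. -/
open Filter Set MeasureTheory
open scoped ENNReal NNReal

namespace Paper

/-! ### Binary sequences and compatibility -/

/-- Delete the `i`-th entry of a sequence, shifting everything to the right of it
one step to the left. -/
def deleteAt {α : Type*} (ξ : ℕ → α) (i : ℕ) : ℕ → α :=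
  fun j => if j < i then ξ j else ξ (j + 1)

/-- The annihilation operator `Δ_i^0` on binary sequences: delete the `i`-th digit
if it is a zero (`false`), otherwise do nothing. -/
def delta0 (ξ : ℕ → Bool) (i : ℕ) : ℕ → Bool :=
  if ξ i = false then deleteAt ξ i else ξ

/-- The annihilation operator `Δ_i^1` on binary sequences: delete the `i`-th digit
if it is a one (`true`), otherwise do nothing. -/
def delta1 (ξ : ℕ → Bool) (i : ℕ) : ℕ → Bool :=
  if ξ i = true then deleteAt ξ i else ξ

/-- `Reach1 η η'` : `η'` is obtained from `η` by finitely many applications of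
operators `Δ_·^1`. -/
def Reach1 : (ℕ → Bool) → (ℕ → Bool) → Prop :=
  Relation.ReflTransGen fun a b => ∃ i, b = delta1 a i

/-- `Reach0 ξ ξ'` : `ξ'` is obtained from `ξ` by finitely many applications of
operators `Δ_·^0`. -/
def Reach0 : (ℕ → Bool) → (ℕ → Bool) → Prop :=
  Relation.ReflTransGen fun a b => ∃ i, b = delta0 a i

/-- Compatibility of an ordered pair of binary sequences: one can delete ones from `η`
and zeroes from `ξ` so that the resulting sequences converge (in the product topology)
to a common limit. -/
def Compatible (η ξ : ℕ → Bool) : Prop :=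
  ∃ (ηs ξs : ℕ → ℕ → Bool) (l : ℕ → Bool),
    (∀ k, Reach1 η (ηs k)) ∧ (∀ k, Reach0 ξ (ξs k)) ∧
      Tendsto ηs atTop (nhds l) ∧ Tendsto ξs atTop (nhds l)

/-- `μ` is the product Bernoulli measure on `{0,1}^ℕ` with parameter `p`. -/
def IsBernoulliProduct (μ : Measure (ℕ → Bool)) (p : ℝ) : Prop :=
  IsProbabilityMeasure μ ∧
    ∀ (s : Finset ℕ) (b : ℕ → Bool),
      μ {ξ | ∀ i ∈ s, ξ i = b i} = ∏ i ∈ s, ENNReal.ofReal (if b i then p else 1 - p)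

/-- The set `Ξ_∞` of binary sequences with infinitely many ones and infinitely many
zeroes. -/
def Xinf (ξ : ℕ → Bool) : Prop :=
  (∀ n, ∃ m, n ≤ m ∧ ξ m = true) ∧ ∀ n, ∃ m, n ≤ m ∧ ξ m = false

/-- Length of the run of ones of `ξ` starting at position `n` (junk value `0` if the
run is infinite). -/
noncomputable def runLen (ξ : ℕ → Bool) (n : ℕ) : ℕ :=
  letI := Classical.dec (∃ k, ξ (n + k) = false)
  if h : ∃ k, ξ (n + k) = false then Nat.find h else 0

/-- The position in `ξ` at which the `j`-th letter of the weighted word `f ξ` starts. -/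
noncomputable def fpos (ξ : ℕ → Bool) : ℕ → ℕ
  | 0 => 0
  | j + 1 => fpos ξ j + max (runLen ξ (fpos ξ j)) 1

/-- The run-length map `f : Ξ_∞ → Ψ`, replacing each maximal run of ones by a single
letter whose weight is the length of the run (zeroes being kept as letters of
weight `0`). -/
noncomputable def fmap (ξ : ℕ → Bool) : ℕ → ℕ :=
  fun j => runLen ξ (fpos ξ j)

/-! ### Weighted words -/

/-- The set `Ψ` of weighted words: a weight `≥ 1` is always followed by a weight `0`. -/
def Psi (ψ : ℕ → ℕ) : Prop := ∀ i, 1 ≤ ψ i → ψ (i + 1) = 0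

/-- The annihilation operator `Δ_i^0` on weighted words. -/
def pdelta0 (ψ : ℕ → ℕ) (i : ℕ) : ℕ → ℕ :=
  if ψ i ≠ 0 then ψ
  else if i = 0 ∨ ψ (i - 1) = 0 ∨ ψ (i + 1) = 0 then deleteAt ψ i
  else fun j => if j + 1 < i then ψ j else if j + 1 = i then ψ (i - 1) + ψ (i + 1) else ψ (j + 2)

/-- The annihilation operator `Δ_i^1` on weighted words. -/
def pdelta1 (ψ : ℕ → ℕ) (i : ℕ) : ℕ → ℕ :=
  if ψ i = 0 then ψ
  else if ψ i = 1 then deleteAt ψ i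
  else Function.update ψ i (ψ i - 1)

/-- Finitely many applications of operators `Δ_·^1` on weighted words. -/
def PReach1 : (ℕ → ℕ) → (ℕ → ℕ) → Prop :=
  Relation.ReflTransGen fun a b => ∃ i, b = pdelta1 a i

/-- Finitely many applications of operators `Δ_·^0` on weighted words. -/
def PReach0 : (ℕ → ℕ) → (ℕ → ℕ) → Prop :=
  Relation.ReflTransGen fun a b => ∃ i, b = pdelta0 a i

/-- Compatibility of an ordered pair of weighted words. -/
def CompatibleP (ζ ψ : ℕ → ℕ) : Prop :=
  ∃ (ζs ψs : ℕ → ℕ → ℕ) (l : ℕ → ℕ),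
    (∀ k, PReach1 ζ (ζs k)) ∧ (∀ k, PReach0 ψ (ψs k)) ∧
      (∀ k, Psi (ζs k)) ∧ (∀ k, Psi (ψs k)) ∧
      Tendsto ζs atTop (nhds l) ∧ Tendsto ψs atTop (nhds l)

/-! ### The oriented percolation process -/

/-- Oriented edges of the graph `G`: from `u` to `u + (0,1)` and from `u` to `u + (1,1)`. -/
def IsStep (u v : ℕ × ℕ) : Prop :=
  (v.1 = u.1 ∧ v.2 = u.2 + 1) ∨ (v.1 = u.1 + 1 ∧ v.2 = u.2 + 1)

/-- Open vertices of the configuration `ω_{ζ,ψ}`.  (Sequences are `0`-indexed in this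
formalization, so the entry of `ζ` at the paper's position `v₁ ≥ 1` is `ζ (v₁ - 1)`.) -/
def OpenV (ζ ψ : ℕ → ℕ) (v : ℕ × ℕ) : Prop :=
  v = (0, 0) ∨ (1 ≤ v.1 ∧ 1 ≤ v.2 ∧ ψ (v.2 - 1) ≤ ζ (v.1 - 1))

/-- Heavy vertices: `v₂ = 0`, or the row weight `ψ_{v₂}` is positive. -/
def Heavy (ψ : ℕ → ℕ) (v : ℕ × ℕ) : Prop := v.2 = 0 ∨ 1 ≤ ψ (v.2 - 1)

/-- `π 0, π 1, …, π n` is an open oriented path in `ω_{ζ,ψ}`. -/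
def IsOpenPath (ζ ψ : ℕ → ℕ) (π : ℕ → ℕ × ℕ) (n : ℕ) : Prop :=
  (∀ i < n, IsStep (π i) (π (i + 1))) ∧ ∀ i ≤ n, OpenV ζ ψ (π i)

/-- The path `π 0, …, π n` is permitted: any two distinct heavy vertices on it have
different first coordinates. -/
def IsPermitted (ψ : ℕ → ℕ) (π : ℕ → ℕ × ℕ) (n : ℕ) : Prop :=
  ∀ i ≤ n, ∀ j ≤ n, π i ≠ π j → Heavy ψ (π i) → Heavy ψ (π j) → (π i).1 ≠ (π j).1

/-- There is an infinite open permitted oriented path starting from the origin in the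
percolation configuration `ω_{ζ,ψ}`. -/
def InfOpenPermitted (ζ ψ : ℕ → ℕ) : Prop :=
  ∃ π : ℕ → ℕ × ℕ, π 0 = (0, 0) ∧ (∀ n, IsStep (π n) (π (n + 1))) ∧
    (∀ n, OpenV ζ ψ (π n)) ∧
    ∀ i j, π i ≠ π j → Heavy ψ (π i) → Heavy ψ (π j) → (π i).1 ≠ (π j).1

/-- `V_{⟨ζ,ψ⟩}(c)`: vertices in row `c` reachable from the origin by an open permitted
oriented path. -/
def Vset (ζ ψ : ℕ → ℕ) (c : ℕ) : Set (ℕ × ℕ) :=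
  {v | v.2 = c ∧ ∃ (π : ℕ → ℕ × ℕ) (n : ℕ), π 0 = (0, 0) ∧ π n = v ∧
    IsOpenPath ζ ψ π n ∧ IsPermitted ψ π n}

/-- The open oriented cluster of the origin in `ω_{ζ,ψ}`. -/
def ClusterO (ζ ψ : ℕ → ℕ) : Set (ℕ × ℕ) :=
  {v | ∃ (π : ℕ → ℕ × ℕ) (n : ℕ), π 0 = (0, 0) ∧ π n = v ∧ IsOpenPath ζ ψ π n}

/-- The horizontal slab `S_{[a,b]}`. -/
def Slab (a b : ℕ) : Set (ℕ × ℕ) := {v | a ≤ v.2 ∧ v.2 ≤ b}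

/-- The horizontal discrete segment in row `c` with endpoints `a` and `b`. -/
def HSeg (c a b : ℕ) : Set (ℕ × ℕ) := {v | v.2 = c ∧ a ≤ v.1 ∧ v.1 ≤ b}

/-- The shift `θ_m`. -/
def shiftSeq (m : ℕ) (ψ : ℕ → ℕ) : ℕ → ℕ := fun j => ψ (j + m)

/-- The hierarchical weighted word `ζ(L)`: the letter at the paper's position
`j ≥ 1` (Lean index `j - 1`) has weight `k` iff `L^k ∣ j` and `L^{k+1} ∤ j`. -/
noncomputable def zetaL (L : ℕ) : ℕ → ℕ := fun j => sSup {k | L ^ k ∣ j + 1}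

/-- Lean indices at which `ψ` has an entry `≥ k`. -/
def idxSet (ψ : ℕ → ℕ) (k : ℕ) : Set ℕ := {n | k ≤ ψ n}

/-- `i_k(ψ)`: the first (1-based, as in the paper) position at which `ψ` has
an entry `≥ k` (meaningful when `idxSet ψ k` is nonempty). -/
noncomputable def idx (ψ : ℕ → ℕ) (k : ℕ) : ℕ := sInf (idxSet ψ k) + 1

/-- Condition a) of being `M`-spaced. -/
def CondA (M : ℕ) (ψ : ℕ → ℕ) : Prop := ∀ i j : ℕ, i < j → M ^ min (ψ i) (ψ j) ≤ j - i

/-- `ψ ∈ Ψ_M^k` : `ψ` is `M`-spaced up to level `k`. -/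
def SpacedUpTo (M k : ℕ) (ψ : ℕ → ℕ) : Prop :=
  Psi ψ ∧ CondA M ψ ∧ ∀ j, 1 ≤ j → j ≤ k → (idxSet ψ j).Nonempty → M ^ j ≤ idx ψ j

/-- `ψ ∈ Ψ_M` : `ψ` is `M`-spaced. -/
def Spaced (M : ℕ) (ψ : ℕ → ℕ) : Prop :=
  Psi ψ ∧ CondA M ψ ∧ ∀ j, 1 ≤ j → (idxSet ψ j).Nonempty → M ^ j ≤ idx ψ j

/-! ### Discrete Hausdorff dimension (Barlow–Taylor) -/

/-- `ν_α(A, F)` with the normalizing diameter `dF` of `F` given explicitly; the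
infimum is over countable covers of `A ∩ F` by integer intervals `[x, y)`. -/
noncomputable def nuBT (α : ℝ) (A F : Set ℤ) (dF : ℝ) : ℝ≥0∞ :=
  (⨅ (B : ℕ → ℤ × ℤ) (_ : A ∩ F ⊆ ⋃ i, Set.Ico (B i).1 (B i).2),
      ∑' i, ENNReal.ofReal ((((B i).2 - (B i).1 : ℤ)) : ℝ) ^ α) /
    ENNReal.ofReal dF ^ α

/-- The annulus `I_n^{(r)}` (for `n ≥ 1`). -/
noncomputable def ringBT (r n : ℕ) : Set ℤ :=
  if n = 1 then Set.Ico (-(r : ℤ)) (r : ℤ)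
  else Set.Ico (-((r : ℤ) ^ n)) ((r : ℤ) ^ n) \ Set.Ico (-((r : ℤ) ^ (n - 1))) ((r : ℤ) ^ (n - 1))

/-- `m_α^{(r)}(A) = ∑_{n ≥ 1} ν_α(A, I_n^{(r)})`. -/
noncomputable def mBT (r : ℕ) (α : ℝ) (A : Set ℤ) : ℝ≥0∞ :=
  ∑' n : ℕ, nuBT α A (ringBT r (n + 1)) (2 * (r : ℝ) ^ (n + 1))

/-- The discrete (Barlow–Taylor) Hausdorff dimension of `A ⊆ ℤ`. -/
noncomputable def dimBT (r : ℕ) (A : Set ℤ) : ℝ :=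
  sInf {α : ℝ | 0 < α ∧ mBT r α A < ⊤}

/-- The set of zeroes of a binary sequence, viewed inside `ℤ` (at the paper's
positions `1, 2, …`). -/
def zeroSetZ (η : ℕ → Bool) : Set ℤ := {i : ℤ | ∃ n : ℕ, i = (n : ℤ) + 1 ∧ η n = false}

/-! ### The grouping construction -/

/-- A cluster together with its mass. -/
abbrev Clu : Type := Set ℕ × ℕ

/-- The set of (paper, i.e. 1-based) positions of the ones of `ξ`. -/
def Gamma (ξ : ℕ → Bool) : Set ℕ := {n | 1 ≤ n ∧ ξ (n - 1) = true}

/-- The span of a set: the smallest interval containing it. -/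
noncomputable def spanI (C : Set ℕ) : Set ℕ := Set.Icc (sInf C) (sSup C)

/-- Euclidean distance between two sets of integers. -/
noncomputable def cluDist (C D : Set ℕ) : ℕ := sInf {d | ∃ a ∈ C, ∃ b ∈ D, d = Nat.dist a b}

/-- Diameter of a set of integers. -/
noncomputable def sdiam (C : Set ℕ) : ℕ := sSup {d | ∃ a ∈ C, ∃ b ∈ C, d = Nat.dist a b}

/-- `C` lies entirely to the left of `D`. -/
def cluLT (C D : Set ℕ) : Prop := ∀ a ∈ C, ∀ b ∈ D, a < b

/-- `p` and `q` are adjacent clusters of the collection `B` (no cluster of `B` lies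
strictly between them) at distance `< t`. -/
def adjStep (B : Set Clu) (t : ℕ) (p q : Clu) : Prop :=
  p ∈ B ∧ q ∈ B ∧ cluDist p.1 q.1 < t ∧
    ((cluLT p.1 q.1 ∧ ∀ r ∈ B, ¬(cluLT p.1 r.1 ∧ cluLT r.1 q.1)) ∨
      (cluLT q.1 p.1 ∧ ∀ r ∈ B, ¬(cluLT q.1 r.1 ∧ cluLT r.1 p.1)))

/-- The maximal run (within the collection `B`, with gap threshold `t`) containing `p`. -/
def runOf (B : Set Clu) (t : ℕ) (p : Clu) : Set Clu :=
  {q ∈ B | Relation.ReflTransGen (adjStep B t) p q}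

/-- `R` is a maximal run of length `≥ 2` of clusters of `B` with gap threshold `t`. -/
def IsRun (B : Set Clu) (t : ℕ) (R : Set Clu) : Prop :=
  ∃ p ∈ B, R = runOf B t p ∧ ∃ q ∈ R, q ≠ p

/-- The level-`(k+1)` cluster created from a maximal `(k+1)`-run `R`: its point set is
`span(R) ∩ Γ`, and its mass is `∑ m(constituents) - k (n - 1)`. -/
noncomputable def runClu (Γ : Set ℕ) (k : ℕ) (R : Set Clu) : Clu :=
  (spanI (⋃ q ∈ R, q.1) ∩ Γ, (∑ᶠ q ∈ R, q.2) - k * (Nat.card R - 1))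

/-- One step of the grouping construction: from the partition `𝐂_k` to `𝐂_{k+1}`. -/
noncomputable def nextPart (Γ : Set ℕ) (M k : ℕ) (S : Set Clu) : Set Clu :=
  {c | ∃ R, IsRun {q ∈ S | k + 1 ≤ q.2} (M ^ (k + 1)) R ∧ c = runClu Γ k R} ∪
    {c ∈ S | ∀ R, IsRun {q ∈ S | k + 1 ≤ q.2} (M ^ (k + 1)) R →
      Disjoint c.1 (spanI (⋃ q ∈ R, q.1))}

/-- The partition `𝐂_k` of `Γ` into clusters with masses (grouping construction with
spacing parameter `M`). -/
noncomputable def parts (Γ : Set ℕ) (M : ℕ) : ℕ → Set Clu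
  | 0 => {c | ∃ x ∈ Γ, c = ({x}, 1)}
  | k + 1 => nextPart Γ M k (parts Γ M k)

/-- `c` is a cluster of level `ℓ`: it appears in `𝐂_ℓ` and in no earlier partition. -/
def IsLevelCluster (Γ : Set ℕ) (M ℓ : ℕ) (c : Clu) : Prop :=
  c ∈ parts Γ M ℓ ∧ ∀ k < ℓ, c ∉ parts Γ M k

/-- `κ(x) < ∞` : the levels of the clusters containing `x` are bounded. -/
def KappaFinite (Γ : Set ℕ) (M : ℕ) (x : ℕ) : Prop :=
  BddAbove {ℓ | ∃ c : Clu, IsLevelCluster Γ M ℓ c ∧ x ∈ c.1}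

/-- The event `Ξ(p)` on which the grouping construction is well set:
`κ(x) < ∞` for every `x ∈ Γ(ξ)`. -/
def GoodSeq (M : ℕ) (ξ : ℕ → Bool) : Prop := ∀ x ∈ Gamma ξ, KappaFinite (Gamma ξ) M x

/-- The collection `𝐂_∞` of maximal clusters: those that stay in `𝐂_k` forever. -/
def maxClusters (Γ : Set ℕ) (M : ℕ) : Set Clu :=
  {c | ∃ ℓ, ∀ k, ℓ ≤ k → c ∈ parts Γ M k}

/-- The defining condition of `χ(ξ) ≤ k` : every maximal cluster of mass `> k`
is at distance `≥ M^{mass}` from the origin.  (Positions are 1-based, so the distance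
from a cluster to `0` is its smallest element.) -/
def ChiCond (Γ : Set ℕ) (M k : ℕ) : Prop :=
  ∀ c ∈ maxClusters Γ M, k < c.2 → M ^ c.2 ≤ sInf c.1

/-- The maximal cluster containing a given point (junk if there is none). -/
noncomputable def maxCluOf (Γ : Set ℕ) (M : ℕ) (x : ℕ) : Clu :=
  letI := Classical.dec (∃ c : Clu, c ∈ maxClusters Γ M ∧ x ∈ c.1)
  if h : ∃ c : Clu, c ∈ maxClusters Γ M ∧ x ∈ c.1 then h.choose else (∅, 0)

/-- Enumeration of the maximal clusters in increasing order, together with the union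
of those already enumerated. -/
noncomputable def enumAux (Γ : Set ℕ) (M : ℕ) : ℕ → Clu × Set ℕ
  | 0 => (maxCluOf Γ M (sInf Γ), (maxCluOf Γ M (sInf Γ)).1)
  | j + 1 =>
    (maxCluOf Γ M (sInf (Γ \ (enumAux Γ M j).2)),
      (enumAux Γ M j).2 ∪ (maxCluOf Γ M (sInf (Γ \ (enumAux Γ M j).2))).1)

/-- The `j`-th maximal cluster `C_{∞,j}` (`j` is 0-based here). -/
noncomputable def enumClu (Γ : Set ℕ) (M : ℕ) (j : ℕ) : Clu := (enumAux Γ M j).1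

/-- The start-point `x̂_j` of the `j`-th maximal cluster (`j` is 0-based here). -/
noncomputable def hatx (Γ : Set ℕ) (M : ℕ) : ℕ → ℕ
  | 0 => sInf Γ
  | j + 1 => sInf (Γ \ (enumAux Γ M j).2)

/-- The (1-based) position `x̂_j - ∑_{t<j} diam(C_{∞,t})` at which the entry of the
`j`-th maximal cluster sits in the weighted word `ψ^ξ`. -/
noncomputable def cluPos (Γ : Set ℕ) (M : ℕ) (j : ℕ) : ℕ :=
  hatx Γ M j - ∑ t ∈ Finset.range j, sdiam (enumClu Γ M t).1

/-- The weighted word `ψ^ξ` associated to `ξ` by the grouping construction. -/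
noncomputable def psiXi (M : ℕ) (ξ : ℕ → Bool) : ℕ → ℕ := fun i =>
  letI := Classical.dec (∃ j : ℕ, i + 1 = cluPos (Gamma ξ) M j)
  if h : ∃ j : ℕ, i + 1 = cluPos (Gamma ξ) M j then (enumClu (Gamma ξ) M h.choose).2 else 0

/-- `ψ ⪯_M ζ`. -/
def PrecM (M : ℕ) (ψ ζ : ℕ → ℕ) : Prop :=
  ∀ j, (ψ j = 0 ↔ ζ j = 0) ∧ (1 ≤ ψ j → ψ j ≤ ζ j ∧ ζ j ≤ 3 * M ^ (ψ j - 1))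

/-- The set `∪_i (span(C_{∞,i}) \ C_{∞,i})` of points to be deleted. -/
def Dset (Γ : Set ℕ) (M : ℕ) : Set ℕ := ⋃ c ∈ maxClusters Γ M, spanI c.1 \ c.1

/-- `j_n(ξ)` : the `n`-th (0-based) element of `Dset`, shifted by `n` to account for
the previous deletions (this is the paper's `j_{n+1}`, a 1-based position). -/
noncomputable def jseq (Γ : Set ℕ) (M : ℕ) (n : ℕ) : ℕ := Nat.nth (· ∈ Dset Γ M) n - n

/-- The iterates `ξ^{(n)}` obtained by successively deleting the zeroes of `ξ`
lying inside spans of maximal clusters. -/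
noncomputable def xiIter (M : ℕ) (ξ : ℕ → Bool) : ℕ → ℕ → Bool
  | 0 => ξ
  | n + 1 => delta0 (xiIter M ξ n) (jseq (Gamma ξ) M n - 1)

/-- The fattened hierarchical weighted word `ζ̃(L)` (with `M = 3(L+1)`). -/
noncomputable def tzeta (L : ℕ) : ℕ → ℕ := fun j =>
  if zetaL L j = 0 then 0 else 3 * (3 * (L + 1)) ^ (zetaL L j - 1)

/-- `|A ∩ [0, n)|` for `A ⊆ ℕ`. -/
noncomputable def massCount (A : Set ℕ) (n : ℕ) : ℕ := Nat.card {a : ℕ | a ∈ A ∧ a < n}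

/-!
Replace a path by the real function `f` giving its column as a function of the row, starting from
`f n = n / 2`. On the rows of weight at least `j`, round `f` down to a multiple of `L ^ j`, for
`j = K, …, 1` in turn, and interpolate. These rows are `M ^ j`-separated, so round `j` changes the
slopes by at most `(L / M) ^ j`, and it fixes the values on the heavier rows, which are already
multiples of `L ^ j`. As `∑ j ∈ [1, K], (L / M) ^ j < 1 / 2` (the sum is finite, so `M = 3 * L` is
enough), all slopes stay in `(0, 1)`, and `⌈f n⌉` is the column of an open permitted path for the
weights up to `K`. Compactness removes `K`.
-/

/-! ### Rounding a real function on nested separated sets -/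

section Rounding

variable {α : Type*} [PseudoMetricSpace α]

lemma lipschitzOnWith_of_pairwise_le_dist {S : Set α} {a c d : ℝ≥0} {h k : α → ℝ} (hd : 0 < d)
    (hS : S.Pairwise fun x y => (d : ℝ) ≤ dist x y) (hh : LipschitzWith c h)
    (hk : ∀ x y, |(k x - h x) - (k y - h y)| ≤ a) : LipschitzOnWith (c + a / d) k S := by
  refine LipschitzOnWith.of_dist_le_mul fun x hx y hy => ?_
  rcases eq_or_ne x y with rfl | hxy
  · simp only [dist_self, mul_zero, le_refl]
  have ha : (a : ℝ) ≤ a / d * dist x y := by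
    rw [div_mul_eq_mul_div, le_div_iff₀ (NNReal.coe_pos.2 hd)]
    exact mul_le_mul_of_nonneg_left (hS hx hy hxy) a.coe_nonneg
  calc dist (k x) (k y) = |(h x - h y) + ((k x - h x) - (k y - h y))| := by
        rw [Real.dist_eq]; congr 1; ring
    _ ≤ |h x - h y| + |(k x - h x) - (k y - h y)| := abs_add_le _ _
    _ ≤ c * dist x y + a / d * dist x y :=
        add_le_add (hh.dist_le_mul x y) ((hk x y).trans ha)
    _ = ↑(c + a / d) * dist x y := by push_cast; ring

lemma exists_lipschitzWith_sub_eqOn_floor {S : Set α} {a c d : ℝ≥0} {f u : α → ℝ}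
    (ha : 0 < a) (hd : 0 < d) (hS : S.Pairwise fun x y => (d : ℝ) ≤ dist x y)
    (hf : LipschitzWith c fun x => f x - u x) :
    ∃ g : α → ℝ, LipschitzWith (c + a / d) (fun x => g x - u x) ∧
      S.EqOn g fun x => ⌊f x / a⌋ * a := by
  have hround : ∀ x y, |((⌊f x / a⌋ * a : ℝ) - u x - (f x - u x)) -
      ((⌊f y / a⌋ * a : ℝ) - u y - (f y - u y))| ≤ a := fun x y => by
    have ha' : (0 : ℝ) < a := NNReal.coe_pos.2 ha
    have hx := Int.sub_floor_div_mul_nonneg (f x) ha'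
    have hx' := Int.sub_floor_div_mul_lt (f x) ha'
    have hy := Int.sub_floor_div_mul_nonneg (f y) ha'
    have hy' := Int.sub_floor_div_mul_lt (f y) ha'
    rw [abs_le]
    constructor <;> linarith
  obtain ⟨g, hg, hgS⟩ := (lipschitzOnWith_of_pairwise_le_dist
    (k := fun x => ⌊f x / a⌋ * a - u x) hd hS hf hround).extend_real
  refine ⟨fun x => g x + u x, by simpa only [add_sub_cancel_right] using hg, fun x hx => ?_⟩
  change g x + u x = _
  rw [← hgS hx, sub_add_cancel]

lemma floor_div_mul_eq_self_of_mem_zmultiples {a y : ℝ} (ha : a ≠ 0)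
    (hy : y ∈ AddSubgroup.zmultiples a) : ⌊y / a⌋ * a = y := by
  obtain ⟨z, rfl⟩ := AddSubgroup.mem_zmultiples_iff.1 hy
  rw [zsmul_eq_mul, mul_div_cancel_right₀ _ ha, Int.floor_intCast]

theorem exists_lipschitzWith_sub_mem_zmultiples {S : ℕ → Set α} {a d : ℕ → ℝ≥0} {u : α → ℝ}
    (hS : Antitone S) (ha : Antitone fun j => AddSubgroup.zmultiples (a j : ℝ))
    (ha0 : ∀ j, 0 < a j) (hd0 : ∀ j, 0 < d j)
    (hsep : ∀ j, (S j).Pairwise fun x y => (d j : ℝ) ≤ dist x y) (K : ℕ) {c : ℝ≥0} {f : α → ℝ}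
    (hf : LipschitzWith c fun x => f x - u x) :
    ∃ g : α → ℝ, LipschitzWith (c + ∑ j ∈ Finset.range K, a j / d j) (fun x => g x - u x) ∧
      (∀ j < K, ∀ x ∈ S j, g x ∈ AddSubgroup.zmultiples (a j : ℝ)) ∧
      ∀ x, (∀ j < K, x ∈ S j ∧ f x ∈ AddSubgroup.zmultiples (a j : ℝ)) → g x = f x := by
  induction K generalizing c f with
  | zero =>
    refine ⟨f, ?_, fun j hj => absurd hj j.not_lt_zero, fun _ _ => rfl⟩
    simpa only [Finset.range_zero, Finset.sum_empty, add_zero] using hf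
  | succ K ih =>
    obtain ⟨f', hf', hf'S⟩ := exists_lipschitzWith_sub_eqOn_floor (ha0 K) (hd0 K) (hsep K) hf
    obtain ⟨g, hg, hgS, hgf'⟩ := ih hf'
    have hf'_mem : ∀ x ∈ S K, f' x ∈ AddSubgroup.zmultiples (a K : ℝ) := fun x hx =>
      AddSubgroup.mem_zmultiples_iff.2 ⟨_, (zsmul_eq_mul _ _).trans (hf'S hx).symm⟩
    refine ⟨g, ?_, fun j hj x hx => ?_, fun x hx => ?_⟩
    · rwa [Finset.sum_range_succ_comm, ← add_assoc]
    · rcases Nat.lt_succ_iff_lt_or_eq.1 hj with hj | rfl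
      · exact hgS j hj x hx
      · rw [hgf' x fun i hi => ⟨hS hi.le hx, ha hi.le (hf'_mem x hx)⟩]
        exact hf'_mem x hx
    · obtain ⟨hxK, hfK⟩ := hx K K.lt_succ_self
      have hf'f : f' x = f x := (hf'S hxK).trans <|
        floor_div_mul_eq_self_of_mem_zmultiples (NNReal.coe_pos.2 (ha0 K)).ne' hfK
      rw [hgf' x fun j hj => hf'f.symm ▸ hx j (hj.trans K.lt_succ_self), hf'f]

end Rounding

/-! ### Column maps -/

/-- An oriented path visiting row `n` in column `x n`: it starts at the origin, leaves column `0` at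
once and, for each level `j ∈ J`, meets the rows of `S j` in distinct columns divisible by `q j`.
The set `J` of levels is a parameter so that finitely many levels can be treated first. -/
structure IsColumnMap (q : ℕ → ℕ) (S : ℕ → Set ℕ) (J : Set ℕ) (x : ℕ → ℕ) : Prop where
  map_zero : x 0 = 0
  succ_eq_or : ∀ n, x (n + 1) = x n ∨ x (n + 1) = x n + 1
  pos : ∀ n ≠ 0, 0 < x n
  dvd : ∀ j ∈ J, ∀ n ∈ S j, q j ∣ x n
  strictMonoOn : ∀ j ∈ J, StrictMonoOn x (S j)

lemma abs_succ_sub_sub_le_of_lipschitzWith {c : ℝ≥0} {s : ℝ} {f : ℕ → ℝ}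
    (hf : LipschitzWith c fun n => f n - n * s) (n : ℕ) : |f (n + 1) - f n - s| ≤ c := by
  have h := hf.dist_le_mul (n + 1) n
  rw [Real.dist_eq, Nat.dist_eq] at h
  push_cast at h
  rw [add_sub_cancel_left, abs_one, mul_one] at h
  convert h using 2
  ring

lemma exists_eq_natCast_mul_of_mem_zmultiples {q : ℕ} {y : ℝ} (hy0 : 0 ≤ y)
    (hy : y ∈ AddSubgroup.zmultiples (q : ℝ)) : ∃ m : ℕ, y = (q * m : ℕ) := by
  obtain ⟨z, rfl⟩ := AddSubgroup.mem_zmultiples_iff.1 hy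
  refine ⟨z.natAbs, ?_⟩
  rw [← abs_of_nonneg hy0, zsmul_eq_mul, abs_mul, Nat.abs_cast, Nat.cast_mul, Nat.cast_natAbs,
    Int.cast_abs, mul_comm]

lemma isColumnMap_natCeil {q : ℕ → ℕ} {S : ℕ → Set ℕ} {J : Set ℕ} {f : ℕ → ℝ} (hf0 : f 0 = 0)
    (hf : StrictMono f) (hstep : ∀ n, f (n + 1) ≤ f n + 1)
    (hfS : ∀ j ∈ J, ∀ n ∈ S j, f n ∈ AddSubgroup.zmultiples (q j : ℝ)) :
    IsColumnMap q S J fun n => ⌈f n⌉₊ := by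
  have hnonneg : ∀ n, 0 ≤ f n := fun n => hf0 ▸ hf.monotone n.zero_le
  have hnat : ∀ j ∈ J, ∀ n ∈ S j, ∃ m : ℕ, f n = (q j * m : ℕ) := fun j hj n hn =>
    exists_eq_natCast_mul_of_mem_zmultiples (hnonneg n) (hfS j hj n hn)
  refine ⟨by simp only [hf0, Nat.ceil_zero], fun n => ?_,
    fun n hn => Nat.ceil_pos.2 (hf0 ▸ hf (Nat.pos_of_ne_zero hn)),
    fun j hj n hn => ?_, fun j hj m hm n _ hmn => ?_⟩
  · have hle : ⌈f n⌉₊ ≤ ⌈f (n + 1)⌉₊ := Nat.ceil_le_ceil (hf n.lt_succ_self).le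
    have hle' : ⌈f (n + 1)⌉₊ ≤ ⌈f n⌉₊ + 1 :=
      (Nat.ceil_le_ceil (hstep n)).trans_eq (Nat.ceil_add_one (hnonneg n))
    grind
  · obtain ⟨m, hm⟩ := hnat j hj n hn
    simp only [hm, Nat.ceil_natCast, dvd_mul_right]
  · obtain ⟨k, hk⟩ := hnat j hj m hm
    simpa only [hk, Nat.ceil_natCast, Nat.lt_ceil] using hf hmn

lemma IsColumnMap.le_self {q : ℕ → ℕ} {S : ℕ → Set ℕ} {J : Set ℕ} {x : ℕ → ℕ}
    (hx : IsColumnMap q S J x) (n : ℕ) : x n ≤ n := by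
  induction n with
  | zero => exact hx.map_zero.le
  | succ n ih => rcases hx.succ_eq_or n with h | h <;> omega

lemma exists_forall_eventually_eq_of_finite {ι α β : Type*} (U : Ultrafilter ι) {s : α → Set β}
    (hs : ∀ a, (s a).Finite) {X : ι → α → β} (hX : ∀ i a, X i a ∈ s a) :
    ∃ x : α → β, ∀ a, ∀ᶠ i in U, X i a = x a := by
  have hlim : ∀ a, ∃ b, ∀ᶠ i in U, X i a = b := fun a => by
    obtain ⟨b, -, hb⟩ := (Ultrafilter.eventually_exists_mem_iff (P := fun b i => X i a = b)
      (hs a)).1 <| Eventually.of_forall fun i => ⟨X i a, hX i a, rfl⟩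
    exact ⟨b, hb⟩
  exact Classical.skolem.1 hlim

lemma exists_isColumnMap_univ_of_forall_Iio {q : ℕ → ℕ} {S : ℕ → Set ℕ}
    (h : ∀ K, ∃ x, IsColumnMap q S (Iio K) x) : ∃ x, IsColumnMap q S univ x := by
  choose X hX using h
  obtain ⟨x, hx⟩ := exists_forall_eventually_eq_of_finite (hyperfilter ℕ)
    (fun n => Set.finite_Iic n) fun K n => (hX K).le_self n
  have hlarge : ∀ j, ∀ᶠ K in (hyperfilter ℕ : Filter ℕ), j < K := fun j =>
    Nat.hyperfilter_le_atTop (eventually_gt_atTop j)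
  refine ⟨x, ?_, fun n => ?_, fun n hn => ?_, fun j _ n hn => ?_, fun j _ m hm n hn hmn => ?_⟩
  · obtain ⟨K, h0⟩ := (hx 0).exists
    exact h0 ▸ (hX K).map_zero
  · obtain ⟨K, hn, hn'⟩ := ((hx n).and (hx (n + 1))).exists
    exact hn ▸ hn' ▸ (hX K).succ_eq_or n
  · obtain ⟨K, hK⟩ := (hx n).exists
    exact hK ▸ (hX K).pos n hn
  · obtain ⟨K, hK, hjK⟩ := ((hx n).and (hlarge j)).exists
    exact hK ▸ (hX K).dvd j hjK n hn
  · obtain ⟨K, ⟨hKm, hKn⟩, hjK⟩ := (((hx m).and (hx n)).and (hlarge j)).exists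
    exact hKm ▸ hKn ▸ (hX K).strictMonoOn j hjK hm hn hmn

section Existence

variable {q : ℕ → ℕ} {d : ℕ → ℝ≥0} {S : ℕ → Set ℕ}

lemma antitone_zmultiples_natCast (hq : ∀ i j, i ≤ j → q i ∣ q j) :
    Antitone fun j => AddSubgroup.zmultiples (q j : ℝ) := fun i j hij => by
  obtain ⟨m, hm⟩ := hq i j hij
  refine AddSubgroup.zmultiples_le_of_mem (AddSubgroup.mem_zmultiples_iff.2 ⟨m, ?_⟩)
  rw [hm, zsmul_eq_mul, Nat.cast_mul, mul_comm, Int.cast_natCast]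

lemma exists_isColumnMap_Iio (hq0 : ∀ j, 0 < q j) (hq : ∀ i j, i ≤ j → q i ∣ q j)
    (hS0 : ∀ j, 0 ∈ S j) (hS : Antitone S) (hd0 : ∀ j, 0 < d j)
    (hsep : ∀ j, (S j).Pairwise fun m n => (d j : ℝ) ≤ dist m n) {K : ℕ}
    (hsum : ∑ j ∈ Finset.range K, q j / d j < 1 / 2) : ∃ x, IsColumnMap q S (Iio K) x := by
  have hslope : LipschitzWith 0 fun n : ℕ => (n * (1 / 2) : ℝ) - n * (1 / 2) := by
    simpa only [sub_self] using LipschitzWith.const (0 : ℝ)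
  obtain ⟨f, hf, hfS, hf_eq⟩ := exists_lipschitzWith_sub_mem_zmultiples (a := fun j => q j) hS
    (antitone_zmultiples_natCast hq) (fun j => Nat.cast_pos.2 (hq0 j)) hd0 hsep K hslope
  rw [zero_add] at hf
  have hf0 : f 0 = 0 := by
    rw [hf_eq 0 fun j _ => ⟨hS0 j, ?_⟩, Nat.cast_zero, zero_mul]
    rw [Nat.cast_zero, zero_mul]
    exact zero_mem _
  have hsum' : ((∑ j ∈ Finset.range K, q j / d j : ℝ≥0) : ℝ) < 1 / 2 := by exact_mod_cast hsum
  have hincr : ∀ n, -(1 / 2) < f (n + 1) - f n - 1 / 2 ∧ f (n + 1) - f n - 1 / 2 < 1 / 2 :=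
    fun n => abs_lt.1 ((abs_succ_sub_sub_le_of_lipschitzWith hf n).trans_lt hsum')
  exact ⟨_, isColumnMap_natCeil hf0 (strictMono_nat_of_lt_succ fun n => by linarith [hincr n])
    (fun n => by linarith [hincr n]) hfS⟩

theorem exists_isColumnMap_univ (hq0 : ∀ j, 0 < q j) (hq : ∀ i j, i ≤ j → q i ∣ q j)
    (hS0 : ∀ j, 0 ∈ S j) (hS : Antitone S) (hd0 : ∀ j, 0 < d j)
    (hsep : ∀ j, (S j).Pairwise fun m n => (d j : ℝ) ≤ dist m n)
    (hsum : ∀ K, ∑ j ∈ Finset.range K, q j / d j < 1 / 2) : ∃ x, IsColumnMap q S univ x :=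
  exists_isColumnMap_univ_of_forall_Iio fun K =>
    exists_isColumnMap_Iio hq0 hq hS0 hS hd0 hsep (hsum K)

end Existence

/-! ### Heavy rows and permitted paths -/

/-- The rows of weight at least `j`, where row `0` (the row of the origin, which carries no letter
of `ψ`) counts as infinitely heavy. Thus `v` is heavy iff `v.2 ∈ heavyRows ψ 1`. -/
def heavyRows (ψ : ℕ → ℕ) (j : ℕ) : Set ℕ := {n | n = 0 ∨ j ≤ ψ (n - 1)}

lemma antitone_heavyRows (ψ : ℕ → ℕ) : Antitone (heavyRows ψ) :=
  fun _ _ hij _ => Or.imp_right hij.trans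

lemma pow_add_le_of_mem_heavyRows {M j m n : ℕ} {ψ : ℕ → ℕ} (hM : 0 < M) (hψ : Spaced M ψ)
    (hj : 1 ≤ j) (hm : m ∈ heavyRows ψ j) (hn : n ∈ heavyRows ψ j) (hmn : m < n) :
    M ^ j + m ≤ n := by
  obtain ⟨-, hspaced, hfirst⟩ := hψ
  have hn' : j ≤ ψ (n - 1) := hn.resolve_left (Nat.ne_zero_of_lt hmn)
  rcases Nat.eq_zero_or_pos m with rfl | hm0
  · have hidx : idx ψ j ≤ n - 1 + 1 := Nat.succ_le_succ (Nat.sInf_le hn')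
    have := hfirst j hj ⟨n - 1, hn'⟩
    omega
  · have hm' : j ≤ ψ (m - 1) := hm.resolve_left hm0.ne'
    have hpow : M ^ j ≤ M ^ min (ψ (m - 1)) (ψ (n - 1)) :=
      Nat.pow_le_pow_right hM (le_min hm' hn')
    have := hspaced (m - 1) (n - 1) (by omega)
    omega

lemma pairwise_pow_le_dist_heavyRows {M j : ℕ} {ψ : ℕ → ℕ} (hM : 0 < M) (hψ : Spaced M ψ)
    (hj : 1 ≤ j) : (heavyRows ψ j).Pairwise fun m n => (M : ℝ) ^ j ≤ dist m n := by
  intro m hm n hn hmn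
  wlog hlt : m < n generalizing m n
  · rw [dist_comm]
    exact this hn hm hmn.symm (hmn.lt_or_gt.resolve_left hlt)
  have hle : (M : ℝ) ^ j + m ≤ n := by
    exact_mod_cast pow_add_le_of_mem_heavyRows hM hψ hj hm hn hlt
  rw [dist_comm, Nat.dist_eq]
  exact (le_sub_iff_add_le.2 hle).trans (le_abs_self _)

lemma IsColumnMap.infOpenPermitted {q ζ ψ x : ℕ → ℕ} (hζ : ∀ j n, q j ∣ n + 1 → j + 1 ≤ ζ n)
    (hx : IsColumnMap q (fun j => heavyRows ψ (j + 1)) univ x) : InfOpenPermitted ζ ψ := by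
  refine ⟨fun n => (x n, n), by simp only [hx.map_zero],
    fun n => (hx.succ_eq_or n).imp (⟨·, rfl⟩) (⟨·, rfl⟩), fun n => ?_, fun i j hij hi hj => ?_⟩
  · rcases eq_or_ne n 0 with rfl | hn
    · exact Or.inl (by simp only [hx.map_zero])
    refine Or.inr ⟨hx.pos n hn, Nat.one_le_iff_ne_zero.2 hn, ?_⟩
    change ψ (n - 1) ≤ ζ (x n - 1)
    rcases hw : ψ (n - 1) with - | j
    · exact Nat.zero_le _
    · refine hζ j _ ?_
      rw [Nat.sub_add_cancel (hx.pos n hn)]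
      exact hx.dvd j (mem_univ j) n (Or.inr hw.ge)
  · exact (hx.strictMonoOn 0 (mem_univ 0)).injOn.ne hi hj fun h => hij (by rw [h])

/-! ### The hierarchical word -/

lemma le_zetaL {L j k : ℕ} (hL : 1 < L) (h : L ^ k ∣ j + 1) : k ≤ zetaL L j :=
  le_csSup ⟨j + 1, fun _ hi => (Nat.lt_pow_self hL).le.trans (Nat.le_of_dvd j.succ_pos hi)⟩ h

lemma sum_range_pow_succ_lt_half {r : ℝ≥0} (hr : r ≤ 1 / 3) (K : ℕ) :
    ∑ j ∈ Finset.range K, r ^ (j + 1) < 1 / 2 := by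
  induction K with
  | zero => simp only [Finset.range_zero, Finset.sum_empty, one_div, inv_pos, zero_lt_two]
  | succ K ih =>
    calc ∑ j ∈ Finset.range (K + 1), r ^ (j + 1)
        = r * (∑ j ∈ Finset.range K, r ^ (j + 1) + 1) := by
          simp only [Finset.sum_range_succ', mul_add, Finset.mul_sum, ← pow_succ', zero_add,
            pow_one, mul_one]
      _ ≤ 1 / 3 * (∑ j ∈ Finset.range K, r ^ (j + 1) + 1) := by gcongr
      _ < 1 / 3 * (1 / 2 + 1) := by gcongr
      _ = 1 / 2 := by norm_num

theorem statement_4_general (L M : ℕ) (hL : 2 ≤ L) (hM : 3 * L ≤ M) (ψ : ℕ → ℕ)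
    (hψ : Spaced M ψ) : InfOpenPermitted (zetaL L) ψ := by
  have hM0 : 0 < M := by omega
  have hratio : (L / M : ℝ≥0) ≤ 1 / 3 := by
    rw [div_le_div_iff₀ (Nat.cast_pos.2 hM0) three_pos, one_mul, mul_comm]
    exact_mod_cast hM
  obtain ⟨x, hx⟩ := exists_isColumnMap_univ (q := fun j => L ^ (j + 1))
    (d := fun j => (M : ℝ≥0) ^ (j + 1)) (S := fun j => heavyRows ψ (j + 1))
    (fun _ => by positivity) (fun _ _ hij => pow_dvd_pow L (by omega)) (fun _ => Or.inl rfl)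
    ((antitone_heavyRows ψ).comp_monotone fun _ _ => Nat.succ_le_succ) (fun _ => by positivity)
    (fun j => by exact_mod_cast pairwise_pow_le_dist_heavyRows hM0 hψ j.succ_pos)
    (fun K => by
      simpa only [Nat.cast_pow, div_pow] using sum_range_pow_succ_lt_half hratio K)
  exact hx.infOpenPermitted fun _ _ => le_zetaL hL

theorem statement_4 (L M : ℕ) (hL : 2 ≤ L) (hM : 3 * (L + 1) ≤ M)
    (ψ : ℕ → ℕ) (hψ : Spaced M ψ) : InfOpenPermitted (zetaL L) ψ :=
  statement_4_general L M hL (by omega) ψ hψ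

end Paper
end

section
/- Let L ≥ 2 be an integer and set M = 3(L+1). If ζ(L) is the hierarchical weighted word and ψ ∈ Ψ_M is M-spaced, then the pair (ζ(L), ψ) is compatible (in the weighted-word sense). -/
open Filter Set MeasureTheory
open scoped ENNReal NNReal

namespace Paper

/-!
Call `g` a matching of `ψ` into `ζ` if every letter `ψ i` fits into `ζ (g i)`, and `g` is strictly
increasing, has `g i ≤ i`, and never stretches distances. A matching gives compatibility: delete
or shrink the letters of `ζ` that are not needed, which leaves at most as many zeroes between
two matched letters as `ψ` has there, and delete the surplus zeroes of `ψ`.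

To match the `M`-spaced word `ψ` into `ζ(L)`, each letter of weight `k` must be sent to a multiple
of `L ^ k`. Start from the map `i ↦ i / 2` and, from the highest level down to level `1`, round its
values at letters of weight `k` down to multiples of `L ^ k`. Such letters, as well as all
heavier ones, are `M ^ k` apart, so this adds a correction with Lipschitz constant `(L / M) ^ k`,
which a Lipschitz extension spreads over the lighter letters. The corrections add up to less
than `1 / 2` when `3 * L ≤ M`, so all slopes end up between `0` and `1`. The number of levels has
to be finite for this; unbounded words follow by compactness.
-/

/-! ### Rounding a function at separated points -/

section Rounding

variable {X : Type*} [PseudoMetricSpace X]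

lemma exists_lipschitzWith_eqOn_of_separated {K r δ : ℝ≥0} {S : Set X} {f g : X → ℝ}
    (hf : LipschitzWith K f) (hδ : 0 < δ) (hS : S.Pairwise fun x y => (δ : ℝ) ≤ dist x y)
    (hg : ∀ x ∈ S, g x ∈ Icc (f x - r) (f x)) :
    ∃ F : X → ℝ, LipschitzWith (r / δ + K) F ∧ EqOn g F S := by
  refine LipschitzOnWith.extend_real (LipschitzOnWith.of_dist_le_mul fun x hx y hy => ?_)
  rcases eq_or_ne x y with rfl | hxy
  · simp
  have hr : (r : ℝ) ≤ r / δ * dist x y := by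
    rw [div_mul_eq_mul_div, le_div_iff₀ (by exact_mod_cast hδ)]
    exact mul_le_mul_of_nonneg_left (hS hx hy hxy) r.coe_nonneg
  have hfxy := abs_le.1 (hf.dist_le_mul x y)
  obtain ⟨hgx, hgx'⟩ := hg x hx
  obtain ⟨hgy, hgy'⟩ := hg y hy
  rw [Real.dist_eq, NNReal.coe_add, NNReal.coe_div, add_mul, abs_le]
  constructor <;> linarith [hfxy.1, hfxy.2]

lemma exists_mem_zmultiples_mem_Icc {r : ℝ} (hr : 0 < r) (a : ℝ) :
    ∃ y ∈ AddSubgroup.zmultiples r, y ∈ Icc (a - r) a := by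
  obtain ⟨z, ⟨hz, hz'⟩, -⟩ := existsUnique_sub_zsmul_mem_Ico hr a 0
  exact ⟨z • r, ⟨z, rfl⟩, by linarith, by linarith⟩

lemma exists_lipschitzWith_sub_mem_zmultiples_s11 {r δ : ℕ → ℝ≥0} (hr : ∀ k, 0 < r k)
    (hδ : ∀ k, 0 < δ k) {φ : X → ℕ}
    (hφ : ∀ k, {x | k ≤ φ x}.Pairwise fun x y => (δ k : ℝ) ≤ dist x y) (p : X → ℝ)
    {m n : ℕ} (hmn : m ≤ n) :
    ∃ f : X → ℝ, LipschitzWith (∑ k ∈ Finset.Ico m n, r k / δ k) (fun x => f x - p x) ∧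
      ∀ x, φ x ∈ Ico m n → f x ∈ AddSubgroup.zmultiples (r (φ x) : ℝ) := by
  induction hmn using Nat.decreasingInduction with
  | self => exact ⟨p, by simp, by simp⟩
  | of_succ k hkn ih =>
    obtain ⟨f, hf, hfmem⟩ := ih
    have round : ∀ x ∈ {x | φ x ∈ Ico k n},
        ∃ y ∈ AddSubgroup.zmultiples (r (φ x) : ℝ), y ∈ Icc (f x - r k) (f x) := by
      rintro x ⟨hkx, hxn⟩
      rcases hkx.eq_or_lt with rfl | hkx
      · exact exists_mem_zmultiples_mem_Icc (hr _) (f x)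
      · exact ⟨f x, hfmem x ⟨hkx, hxn⟩, by simp⟩
    choose! y hymem hy using round
    obtain ⟨F, hF, hFy⟩ := exists_lipschitzWith_eqOn_of_separated (g := fun x => y x - p x) hf
      (hδ k) ((hφ k).mono fun x (hx : φ x ∈ Ico k n) => hx.1)
      fun x hx => ⟨by linarith [(hy x hx).1], by linarith [(hy x hx).2]⟩
    refine ⟨fun x => F x + p x, ?_, fun x hx => ?_⟩
    · simpa only [add_sub_cancel_right, Finset.sum_eq_sum_Ico_succ_bot hkn] using hF
    · have hFx : F x + p x = y x := by rw [← hFy hx, sub_add_cancel]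
      simpa only [hFx] using hymem x hx

end Rounding

lemma sum_Ico_one_pow_lt_half {x : ℝ≥0} (hx : x ≤ 1 / 3) (n : ℕ) :
    ∑ k ∈ Finset.Ico 1 (n + 1), x ^ k < 1 / 2 := by
  have hthird : ∑ k ∈ Finset.Ico 1 (n + 1), (1 / 3 : ℝ) ^ k < 1 / 2 := by
    rw [geom_sum_Ico (by norm_num) (by omega), div_lt_iff_of_neg (by norm_num)]
    have : (0 : ℝ) < (1 / 3) ^ (n + 1) := by positivity
    linarith
  refine (Finset.sum_le_sum fun k _ => pow_le_pow_left₀ zero_le hx k).trans_lt ?_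
  rw [← NNReal.coe_lt_coe]
  push_cast
  exact hthird

lemma sub_mem_Ioo_of_lipschitzWith_sub_half {K : ℝ≥0} {f : ℕ → ℝ} (hK : K < 1 / 2)
    (hf : LipschitzWith K fun i => f i - i / 2) {a b : ℕ} (hab : a < b) :
    f b - f a ∈ Ioo (0 : ℝ) (b - a) := by
  have hab' : (0 : ℝ) < b - a := sub_pos.2 (by exact_mod_cast hab)
  have hlip := hf.dist_le_mul b a
  rw [Real.dist_eq, Nat.dist_eq, abs_of_pos hab', abs_le] at hlip
  have hK' : K * ((b : ℝ) - a) < 1 / 2 * (b - a) :=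
    mul_lt_mul_of_pos_right (by exact_mod_cast hK) hab'
  constructor <;> linarith [hlip.1, hlip.2]

/-! ### Matchings -/

/-- `g` matches the letters of `ψ` at the positions in `S` with letters of `ζ` that are at least
as heavy. The displacement `i - g i` is nonnegative and nondecreasing on `S` (stated without
truncated subtraction): no gap between matched letters is wider in `ζ` than in `ψ`. -/
structure IsMatching (ζ ψ : ℕ → ℕ) (S : Set ℕ) (g : ℕ → ℕ) : Prop where
  weight_le : ∀ i ∈ S, ψ i ≤ ζ (g i)
  le_self : ∀ i ∈ S, g i ≤ i
  strictMonoOn : StrictMonoOn g S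
  add_le_add : ∀ i ∈ S, ∀ j ∈ S, i < j → g j + i ≤ j + g i

lemma exists_isMatching_iUnion {ζ ψ : ℕ → ℕ} {S : ℕ → Set ℕ} (hS : Monotone S)
    (h : ∀ n, ∃ g, IsMatching ζ ψ (S n) g) : ∃ g, IsMatching ζ ψ (⋃ n, S n) g := by
  choose g hg using h
  have hmem : ∀ i ∈ ⋃ n, S n, ∀ᶠ n in (hyperfilter ℕ : Filter ℕ), i ∈ S n := by
    intro i hi
    obtain ⟨n, hn⟩ := mem_iUnion.1 hi
    exact Nat.hyperfilter_le_atTop ((eventually_ge_atTop n).mono fun m hm => hS hm hn)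
  have hlim : ∀ i ∈ ⋃ n, S n, ∃ v, ∀ᶠ n in (hyperfilter ℕ : Filter ℕ), g n i = v := by
    intro i hi
    have hbdd : ∀ᶠ n in (hyperfilter ℕ : Filter ℕ), ∃ v ∈ Iic i, g n i = v :=
      (hmem i hi).mono fun n hn => ⟨_, (hg n).le_self i hn, rfl⟩
    obtain ⟨v, -, hv⟩ := (Ultrafilter.eventually_exists_mem_iff (finite_Iic i)).1 hbdd
    exact ⟨v, hv⟩
  choose! l hl using hlim
  have hboth : ∀ i ∈ ⋃ n, S n, ∀ j ∈ ⋃ n, S n,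
      ∃ n, (i ∈ S n ∧ g n i = l i) ∧ j ∈ S n ∧ g n j = l j := fun i hi j hj =>
    (((hmem i hi).and (hl i hi)).and ((hmem j hj).and (hl j hj))).exists
  refine ⟨l, fun i hi => ?_, fun i hi => ?_, fun i hi j hj hij => ?_, fun i hi j hj hij => ?_⟩
  · obtain ⟨n, ⟨hin, hli⟩, -⟩ := hboth i hi i hi
    exact hli ▸ (hg n).weight_le i hin
  · obtain ⟨n, ⟨hin, hli⟩, -⟩ := hboth i hi i hi
    exact hli ▸ (hg n).le_self i hin
  · obtain ⟨n, ⟨hin, hli⟩, hjn, hlj⟩ := hboth i hi j hj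
    exact hli ▸ hlj ▸ (hg n).strictMonoOn hin hjn hij
  · obtain ⟨n, ⟨hin, hli⟩, hjn, hlj⟩ := hboth i hi j hj
    exact hli ▸ hlj ▸ (hg n).add_le_add i hin j hjn hij

/-! ### Matching a spaced word into the hierarchical word -/

lemma le_zetaL_iff {L : ℕ} (hL : 2 ≤ L) {j k : ℕ} : k ≤ zetaL L j ↔ L ^ k ∣ j + 1 := by
  have hbdd : BddAbove {k | L ^ k ∣ j + 1} :=
    ⟨j + 1, fun k hk => (Nat.lt_pow_self hL).le.trans (Nat.le_of_dvd j.succ_pos hk)⟩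
  refine ⟨fun hk => (pow_dvd_pow L hk).trans ?_, fun hk => le_csSup hbdd hk⟩
  exact Nat.sSup_mem ⟨0, by simp⟩ hbdd

lemma psi_zetaL {L : ℕ} (hL : 2 ≤ L) : Psi (zetaL L) := by
  intro i hi
  by_contra hne
  have hdvd : L ∣ i + 1 := by simpa using (le_zetaL_iff hL).1 hi
  have hdvd' : L ∣ i + 1 + 1 := by simpa using (le_zetaL_iff hL).1 (Nat.one_le_iff_ne_zero.2 hne)
  have := Nat.le_of_dvd one_pos ((Nat.dvd_add_right hdvd).1 hdvd')
  omega

/-- The weights of `ψ` at the paper's 1-based positions, with a letter of weight `n` placed at the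
origin. Condition (b′) of being spaced then becomes condition (a) for this extra letter. -/
def withOrigin (n : ℕ) (ψ : ℕ → ℕ) : ℕ → ℕ
  | 0 => n
  | i + 1 => ψ i

lemma Spaced.pow_le_add_one {M : ℕ} {ψ : ℕ → ℕ} (hψ : Spaced M ψ) {k j : ℕ} (hk : k ≤ ψ j) :
    M ^ k ≤ j + 1 := by
  rcases Nat.eq_zero_or_pos k with rfl | hpos
  · simp
  · exact (hψ.2.2 k hpos ⟨j, hk⟩).trans (Nat.succ_le_succ (Nat.sInf_le hk))

lemma Spaced.pairwise_pow_le_dist {M : ℕ} {ψ : ℕ → ℕ} (hψ : Spaced M ψ) (hM : 0 < M) (n k : ℕ) :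
    {i | k ≤ withOrigin n ψ i}.Pairwise fun i j => (M : ℝ) ^ k ≤ dist i j := by
  have hlt : ∀ i j, i < j → k ≤ withOrigin n ψ i → k ≤ withOrigin n ψ j → M ^ k ≤ j - i := by
    rintro (_ | i) (_ | j) hij hi hj
    · omega
    · exact hψ.pow_le_add_one hj
    · omega
    · rw [Nat.add_sub_add_right]
      exact (Nat.pow_le_pow_right hM (le_min hi hj)).trans (hψ.2.1 i j (by omega))
  intro i hi j hj hij
  wlog h : i < j generalizing i j
  · rw [dist_comm]
    exact this hj hi hij.symm (by omega)
  · rw [dist_comm, Nat.dist_eq, ← Nat.cast_sub h.le, Nat.abs_cast]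
    exact_mod_cast hlt i j h hi hj

lemma Spaced.exists_rounding {L M : ℕ} (hL : 0 < L) (hM : 3 * L ≤ M) {ψ : ℕ → ℕ}
    (hψ : Spaced M ψ) (n : ℕ) :
    ∃ f : ℕ → ℝ, (∀ a b : ℕ, a < b → f b - f a ∈ Ioo (0 : ℝ) (b - a)) ∧
      ∀ i, withOrigin n ψ i ∈ Icc 1 n →
        f i ∈ AddSubgroup.zmultiples ((L : ℝ) ^ withOrigin n ψ i) := by
  have hMpos : 0 < M := by omega
  obtain ⟨f, hf, hfmem⟩ := exists_lipschitzWith_sub_mem_zmultiples_s11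
    (r := fun k => (L : ℝ≥0) ^ k) (δ := fun k => (M : ℝ≥0) ^ k) (φ := withOrigin n ψ)
    (fun k => by positivity) (fun k => by positivity)
    (fun k => by simpa using hψ.pairwise_pow_le_dist hMpos n k)
    (fun i : ℕ => (i : ℝ) / 2) (Nat.le_add_left 1 n)
  have hratio : (L : ℝ≥0) / M ≤ 1 / 3 := by
    rw [div_le_div_iff₀ (by positivity) (by norm_num), one_mul, mul_comm]
    exact_mod_cast hM
  have hsum := sum_Ico_one_pow_lt_half hratio n
  simp only [div_pow] at hsum
  refine ⟨f, fun a b => sub_mem_Ioo_of_lipschitzWith_sub_half hsum hf, fun i hi => ?_⟩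
  simpa using hfmem i ⟨hi.1, Nat.lt_succ_of_le hi.2⟩

lemma exists_dvd_of_mem_zmultiples {d : ℕ} {x : ℝ} (hx : x ∈ AddSubgroup.zmultiples (d : ℝ))
    (hpos : 0 < x) : ∃ m : ℕ, x = m + 1 ∧ d ∣ m + 1 := by
  obtain ⟨z, rfl⟩ := AddSubgroup.mem_zmultiples_iff.1 hx
  rw [zsmul_eq_mul] at hpos ⊢
  have hz : 0 < z * d := by exact_mod_cast hpos
  obtain ⟨m, hm⟩ := Int.eq_succ_of_zero_lt hz
  exact ⟨m, by exact_mod_cast hm, Int.natCast_dvd_natCast.1 ⟨z, by push_cast; lia⟩⟩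

lemma Spaced.exists_isMatching_level_le {L M : ℕ} (hL : 2 ≤ L) (hM : 3 * L ≤ M) {ψ : ℕ → ℕ}
    (hψ : Spaced M ψ) (n : ℕ) : ∃ g, IsMatching (zetaL L) ψ {i | ψ i ∈ Icc 1 n} g := by
  obtain ⟨f, hf, hfmem⟩ := hψ.exists_rounding (by omega) hM n
  have hg : ∀ i ∈ {i | ψ i ∈ Icc 1 n},
      ∃ m : ℕ, f (i + 1) - f 0 = m + 1 ∧ L ^ ψ i ∣ m + 1 := by
    intro i hi
    have horigin : f 0 ∈ AddSubgroup.zmultiples ((L : ℝ) ^ n) :=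
      hfmem 0 ⟨hi.1.trans hi.2, le_rfl⟩
    have hle : AddSubgroup.zmultiples ((L : ℝ) ^ n) ≤ AddSubgroup.zmultiples ((L : ℝ) ^ ψ i) := by
      rw [AddSubgroup.zmultiples_le, AddSubgroup.mem_zmultiples_iff]
      refine ⟨L ^ (n - ψ i), ?_⟩
      rw [zsmul_eq_mul]
      push_cast
      rw [← pow_add, Nat.sub_add_cancel hi.2]
    refine exists_dvd_of_mem_zmultiples ?_ (hf 0 (i + 1) i.succ_pos).1
    exact_mod_cast sub_mem (hfmem (i + 1) hi) (hle horigin)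
  choose! g hgf hgdvd using hg
  refine ⟨g, fun i hi => (le_zetaL_iff hL).2 (hgdvd i hi), fun i hi => ?_,
    fun i hi j hj hij => ?_, fun i hi j hj hij => ?_⟩
  · have h := (hf 0 (i + 1) i.succ_pos).2
    rw [hgf i hi] at h
    push_cast at h
    exact_mod_cast (by linarith : (g i : ℝ) ≤ i)
  · have h := (hf (i + 1) (j + 1) (Nat.succ_lt_succ hij)).1
    exact_mod_cast (by linarith [hgf i hi, hgf j hj] : (g i : ℝ) < g j)
  · have h := (hf (i + 1) (j + 1) (Nat.succ_lt_succ hij)).2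
    push_cast at h
    exact_mod_cast (by linarith [hgf i hi, hgf j hj] : (g j : ℝ) + i ≤ j + g i)

lemma Spaced.exists_isMatching {L M : ℕ} (hL : 2 ≤ L) (hM : 3 * L ≤ M) {ψ : ℕ → ℕ}
    (hψ : Spaced M ψ) : ∃ g, IsMatching (zetaL L) ψ (Function.support ψ) g := by
  have hsupport : ⋃ n, {i | ψ i ∈ Icc 1 n} = Function.support ψ := by
    ext i
    simpa [Nat.one_le_iff_ne_zero] using fun _ => ⟨ψ i, le_rfl⟩
  exact hsupport ▸ exists_isMatching_iUnion (fun m n hmn i hi => ⟨hi.1, hi.2.trans hmn⟩)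
    (hψ.exists_isMatching_level_le hL hM)

/-! ### Annihilation operators on weighted words -/

lemma deleteAt_of_lt {α : Type*} (a : ℕ → α) {i j : ℕ} (hj : j < i) : deleteAt a i j = a j :=
  if_pos hj

lemma deleteAt_add {α : Type*} (a : ℕ → α) (i m : ℕ) : deleteAt a i (i + m) = a (i + 1 + m) := by
  rw [deleteAt, if_neg (by omega), Nat.add_right_comm]

lemma deleteAt_update_self {α : Type*} (a : ℕ → α) (i : ℕ) (w : α) :
    deleteAt (Function.update a i w) i = deleteAt a i := by
  funext j
  simp only [deleteAt]
  split_ifs with hj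
  · exact Function.update_of_ne hj.ne _ _
  · exact Function.update_of_ne (by omega) _ _

lemma psi_deleteAt {a : ℕ → ℕ} (ha : Psi a) {i : ℕ}
    (hi : i = 0 ∨ a (i - 1) = 0 ∨ a (i + 1) = 0) : Psi (deleteAt a i) := by
  intro j hj
  have hj0 := ha j
  have hj1 := ha (j + 1)
  rcases lt_trichotomy (j + 1) i with h | rfl | h <;> grind [deleteAt]

lemma psi_pdelta1 {a : ℕ → ℕ} (ha : Psi a) (i : ℕ) : Psi (pdelta1 a i) := by
  rw [pdelta1]
  split_ifs with h0 h1
  · exact ha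
  · exact psi_deleteAt ha (Or.inr (Or.inr (ha i h1.ge)))
  · intro j hj
    have := ha j
    grind [Function.update_apply]

lemma psi_pdelta0 {a : ℕ → ℕ} (ha : Psi a) (i : ℕ) : Psi (pdelta0 a i) := by
  rw [pdelta0]
  split_ifs with h0 h1
  · exact ha
  · exact psi_deleteAt ha h1
  · intro j hj
    have hj0 := ha j
    have hj2 := ha (j + 2)
    grind

lemma psi_of_preach1 {a b : ℕ → ℕ} (ha : Psi a) (h : PReach1 a b) : Psi b := by
  induction h with
  | refl => exact ha
  | tail _ h ih => obtain ⟨i, rfl⟩ := h; exact psi_pdelta1 ih i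

lemma psi_of_preach0 {a b : ℕ → ℕ} (ha : Psi a) (h : PReach0 a b) : Psi b := by
  induction h with
  | refl => exact ha
  | tail _ h ih => obtain ⟨i, rfl⟩ := h; exact psi_pdelta0 ih i

lemma preach1_update {a : ℕ → ℕ} {i w : ℕ} (hw : w ≠ 0) (hwa : w ≤ a i) :
    PReach1 a (Function.update a i w) := by
  induction hwa using Nat.decreasingInduction with
  | self => rw [Function.update_eq_self]; exact .refl
  | of_succ w _ ih =>
    refine .tail (ih w.succ_ne_zero) ⟨i, ?_⟩
    simp [pdelta1, hw]

lemma preach1_deleteAt {a : ℕ → ℕ} {i : ℕ} (hi : a i ≠ 0) : PReach1 a (deleteAt a i) := by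
  refine .tail (preach1_update one_ne_zero (Nat.one_le_iff_ne_zero.2 hi)) ⟨i, ?_⟩
  simp [pdelta1, deleteAt_update_self]

lemma preach0_deleteAt {a : ℕ → ℕ} {i : ℕ} (hi : a i = 0) (h : i = 0 ∨ a (i - 1) = 0) :
    PReach0 a (deleteAt a i) := by
  refine .single ⟨i, ?_⟩
  rw [pdelta0, if_neg (by simpa using hi), if_pos (by tauto)]

lemma compatibleP_of_forall_lt_eq {ζ ψ : ℕ → ℕ} {us vs : ℕ → ℕ → ℕ} (hζ : Psi ζ) (hψ : Psi ψ)
    (hu : ∀ k, PReach1 ζ (us k)) (hv : ∀ k, PReach0 ψ (vs k))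
    (hagree : ∀ k, ∀ m < k, us k m = vs k m) (hstable : ∀ k, ∀ m < k, us (k + 1) m = us k m) :
    CompatibleP ζ ψ := by
  have hlim : ∀ m, ∀ k ≥ m + 1, us k m = us (m + 1) m := fun m k hk =>
    Nat.le_induction rfl (fun k hk ih => (hstable k m hk).trans ih) k hk
  refine ⟨us, vs, fun m => us (m + 1) m, hu, hv, fun k => psi_of_preach1 hζ (hu k),
    fun k => psi_of_preach0 hψ (hv k), tendsto_pi_nhds.2 fun m => ?_, tendsto_pi_nhds.2 fun m => ?_⟩
  all_goals
    refine tendsto_nhds_of_eventually_eq ((eventually_ge_atTop (m + 1)).mono fun k hk => ?_)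
  · exact hlim m k hk
  · exact (hagree k m hk).symm.trans (hlim m k hk)

/-! ### Compatibility from a matching -/

/-- A stage of the simultaneous reduction of `ζ` and `ψ` along a matching `g`: the reduced words
`u` and `v` agree on their first `len` letters, and continue as `ζ` from position `p` and as `ψ`
from position `q`. -/
structure Alignment (ζ ψ g : ℕ → ℕ) where
  len : ℕ
  p : ℕ
  q : ℕ
  u : ℕ → ℕ
  v : ℕ → ℕ
  reach_u : PReach1 ζ u
  reach_v : PReach0 ψ v
  agree : ∀ m < len, u m = v m
  u_tail : ∀ m, u (len + m) = ζ (p + m)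
  v_tail : ∀ m, v (len + m) = ψ (q + m)
  -- When `ζ p` is a letter, the zeroes of `ψ` from `q` on can be deleted without merging letters.
  separated : len = 0 ∨ v (len - 1) = 0 ∨ ζ p = 0
  p_le : ∀ i ≥ q, ψ i ≠ 0 → p ≤ g i
  gap_le : ∀ i ≥ q, ψ i ≠ 0 → g i + q ≤ i + p

namespace Alignment

variable {ζ ψ g : ℕ → ℕ}

/-- The stage before any letter has been read. -/
def start (hg : IsMatching ζ ψ (Function.support ψ) g) : Alignment ζ ψ g where
  len := 0
  p := 0
  q := 0
  u := ζ
  v := ψ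
  reach_u := .refl
  reach_v := .refl
  agree := by simp
  u_tail _ := rfl
  v_tail _ := rfl
  separated := Or.inl rfl
  p_le _ _ _ := Nat.zero_le _
  gap_le i _ hi := hg.le_self i hi

lemma u_len (s : Alignment ζ ψ g) : s.u s.len = ζ s.p := s.u_tail 0

lemma v_len (s : Alignment ζ ψ g) : s.v s.len = ψ s.q := s.v_tail 0

lemma apply_q (s : Alignment ζ ψ g) (hq : ψ s.q ≠ 0) : g s.q = s.p := by
  have := s.p_le s.q le_rfl hq
  have := s.gap_le s.q le_rfl hq
  omega

/-- Reads the letter `ψ q`, which is matched with `ζ p`, lowering the weight of the latter. -/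
def readLetter (hζ : Psi ζ) (hg : IsMatching ζ ψ (Function.support ψ) g) (s : Alignment ζ ψ g)
    (hq : ψ s.q ≠ 0) : Alignment ζ ψ g :=
  have hle : ψ s.q ≤ ζ s.p := s.apply_q hq ▸ hg.weight_le s.q hq
  { len := s.len + 1
    p := s.p + 1
    q := s.q + 1
    u := Function.update s.u s.len (ψ s.q)
    v := s.v
    reach_u := s.reach_u.trans (preach1_update hq (hle.trans_eq s.u_len.symm))
    reach_v := s.reach_v
    agree := by
      intro m hm
      rcases Nat.lt_succ_iff_lt_or_eq.1 hm with h | rfl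
      · rw [Function.update_of_ne h.ne, s.agree m h]
      · rw [Function.update_self, s.v_len]
    u_tail := fun m => by
      rw [Function.update_of_ne (by omega), add_assoc, s.u_tail, add_assoc]
    v_tail := fun m => by rw [add_assoc, s.v_tail, add_assoc]
    separated := Or.inr (Or.inr (hζ s.p (by omega)))
    p_le := fun i hi hψi => s.apply_q hq ▸ hg.strictMonoOn hq hψi hi
    gap_le := fun i hi hψi => by
      have := hg.add_le_add s.q hq i hψi hi
      have := s.apply_q hq
      omega }

/-- Reads a zero of both words. -/
def readZero (hg : IsMatching ζ ψ (Function.support ψ) g) (s : Alignment ζ ψ g)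
    (hp : ζ s.p = 0) (hq : ψ s.q = 0) : Alignment ζ ψ g where
  len := s.len + 1
  p := s.p + 1
  q := s.q + 1
  u := s.u
  v := s.v
  reach_u := s.reach_u
  reach_v := s.reach_v
  agree := by
    intro m hm
    rcases Nat.lt_succ_iff_lt_or_eq.1 hm with h | rfl
    · exact s.agree m h
    · rw [s.u_len, s.v_len, hp, hq]
  u_tail m := by rw [add_assoc, s.u_tail, add_assoc]
  v_tail m := by rw [add_assoc, s.v_tail, add_assoc]
  separated := Or.inr (Or.inl (s.v_len.trans hq))
  p_le i hi hψi := by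
    have hne : s.p ≠ g i := by
      rintro h
      have := hg.weight_le i hψi
      rw [← h, hp] at this
      omega
    have := s.p_le i (by omega) hψi
    omega
  gap_le i hi hψi := by
    have := s.gap_le i (by omega) hψi
    omega

/-- Deletes a zero of `ψ` when `ζ` is at a letter and `ψ` has a zero to spare before each of the
matched letters to come. -/
def dropZero (s : Alignment ζ ψ g) (hp : ζ s.p ≠ 0) (hq : ψ s.q = 0)
    (hspare : ∀ i ≥ s.q, ψ i ≠ 0 → g i + s.q < i + s.p) : Alignment ζ ψ g where
  len := s.len
  p := s.p
  q := s.q + 1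
  u := s.u
  v := deleteAt s.v s.len
  reach_u := s.reach_u
  reach_v := s.reach_v.trans
    (preach0_deleteAt (s.v_len.trans hq) (s.separated.imp_right fun h => h.resolve_right hp))
  agree m hm := by rw [deleteAt_of_lt _ hm, s.agree m hm]
  u_tail := s.u_tail
  v_tail m := by rw [deleteAt_add, add_assoc, s.v_tail, add_assoc]
  separated := by
    rcases s.len.eq_zero_or_pos with h | h
    · exact Or.inl h
    · rw [deleteAt_of_lt _ (Nat.sub_lt h one_pos)]
      exact s.separated
  p_le i hi := s.p_le i (by omega)
  gap_le i hi := hspare i (by omega)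

/-- Deletes a letter of `ζ` that is matched with no letter of `ψ`. -/
def dropLetter (hζ : Psi ζ) (s : Alignment ζ ψ g) (hp : ζ s.p ≠ 0)
    (hunmatched : ∀ i ≥ s.q, ψ i ≠ 0 → g i ≠ s.p) : Alignment ζ ψ g where
  len := s.len
  p := s.p + 1
  q := s.q
  u := deleteAt s.u s.len
  v := s.v
  reach_u := s.reach_u.trans (preach1_deleteAt (s.u_len.trans_ne hp))
  reach_v := s.reach_v
  agree m hm := by rw [deleteAt_of_lt _ hm, s.agree m hm]
  u_tail m := by rw [deleteAt_add, add_assoc, s.u_tail, add_assoc]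
  v_tail := s.v_tail
  separated := Or.inr (Or.inr (hζ s.p (Nat.one_le_iff_ne_zero.2 hp)))
  p_le i hi hψi := (s.p_le i hi hψi).lt_of_ne (hunmatched i hi hψi).symm
  gap_le i hi hψi := by
    have := s.gap_le i hi hψi
    omega

/-- `t` arises from `s` by fixing exactly one more letter of the limit word. -/
def IsNext (s t : Alignment ζ ψ g) : Prop := t.len = s.len + 1 ∧ ∀ m < s.len, t.u m = s.u m

lemma isNext_readLetter (hζ : Psi ζ) (hg : IsMatching ζ ψ (Function.support ψ) g)
    (s : Alignment ζ ψ g) (hq : ψ s.q ≠ 0) : s.IsNext (s.readLetter hζ hg hq) :=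
  ⟨rfl, fun _ hm => Function.update_of_ne hm.ne _ _⟩

lemma exists_isNext_of_matched (hζ : Psi ζ) (hg : IsMatching ζ ψ (Function.support ψ) g)
    {i : ℕ} (hi : ψ i ≠ 0) (s : Alignment ζ ψ g) (hqi : s.q ≤ i) (hgi : g i = s.p) :
    ∃ t, s.IsNext t := by
  obtain ⟨d, hd⟩ := Nat.exists_eq_add_of_le hqi
  induction d generalizing s with
  | zero => exact ⟨_, s.isNext_readLetter hζ hg (by rwa [hd] at hi)⟩
  | succ d ih =>
    have hq : ψ s.q = 0 := by
      by_contra hne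
      have := hg.strictMonoOn hne hi (by omega)
      have := s.apply_q hne
      omega
    have hp : ζ s.p ≠ 0 := by
      have := hg.weight_le i hi
      rw [hgi] at this
      omega
    have hspare : ∀ j ≥ s.q, ψ j ≠ 0 → g j + s.q < j + s.p := by
      intro j hj hψj
      rcases lt_trichotomy j i with h | rfl | h
      · have := hg.strictMonoOn hψj hi h
        have := s.p_le j hj hψj
        omega
      · omega
      · have := hg.add_le_add i hi j hψj h
        omega
    exact ih (s.dropZero hp hq hspare) (by simp only [dropZero]; omega) hgi
      (by simp only [dropZero]; omega)

lemma exists_isNext (hζ : Psi ζ) (hg : IsMatching ζ ψ (Function.support ψ) g)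
    (s : Alignment ζ ψ g) : ∃ t, s.IsNext t := by
  by_cases hq : ψ s.q = 0
  · by_cases hp : ζ s.p = 0
    · exact ⟨s.readZero hg hp hq, rfl, fun _ _ => rfl⟩
    · by_cases hmatched : ∃ i ≥ s.q, ψ i ≠ 0 ∧ g i = s.p
      · obtain ⟨i, hqi, hi, hgi⟩ := hmatched
        exact exists_isNext_of_matched hζ hg hi s hqi hgi
      · push Not at hmatched
        exact ⟨(s.dropLetter hζ hp hmatched).readZero hg
          (hζ s.p (Nat.one_le_iff_ne_zero.2 hp)) hq, rfl, fun _ hm => deleteAt_of_lt _ hm⟩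
  · exact ⟨_, s.isNext_readLetter hζ hg hq⟩

end Alignment

theorem compatibleP_of_isMatching {ζ ψ g : ℕ → ℕ} (hζ : Psi ζ) (hψ : Psi ψ)
    (hg : IsMatching ζ ψ (Function.support ψ) g) : CompatibleP ζ ψ := by
  choose next hlen hu using Alignment.exists_isNext hζ hg
  let s : ℕ → Alignment ζ ψ g := fun k => next^[k] (Alignment.start hg)
  have hsucc : ∀ k, s (k + 1) = next (s k) := fun k => Function.iterate_succ_apply' next k _
  have hslen : ∀ k, (s k).len = k := fun k =>
    Nat.rec rfl (fun k ih => by rw [hsucc, hlen, ih]) k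
  refine compatibleP_of_forall_lt_eq hζ hψ (fun k => (s k).reach_u) (fun k => (s k).reach_v)
    (fun k m hm => (s k).agree m (by rwa [hslen])) fun k m hm => ?_
  rw [hsucc]
  exact hu (s k) m (by rwa [hslen])

theorem statement_11_general {L M : ℕ} (hL : 2 ≤ L) (hM : 3 * L ≤ M) {ψ : ℕ → ℕ}
    (hψ : Spaced M ψ) : CompatibleP (zetaL L) ψ := by
  obtain ⟨g, hg⟩ := hψ.exists_isMatching hL hM
  exact compatibleP_of_isMatching (psi_zetaL hL) hψ.1 hg

theorem statement_11 (L : ℕ) (hL : 2 ≤ L) (ψ : ℕ → ℕ) (hψ : Spaced (3 * (L + 1)) ψ) :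
    CompatibleP (zetaL L) ψ :=
  statement_11_general hL (by omega) hψ

end Paper
end

section
/- Let ξ be distributed according to the product Bernoulli measure ℙ_p on {0,1}^ℕ with parameter p > 0, and let M be an integer with 3 ≤ M < (64p)^{−1/2}. Then ℙ_p-almost surely κ(x) < ∞ for every x ∈ Γ(ξ), i.e. every point of Γ belongs only to clusters of finitely many levels in the grouping construction with spacing parameter M. -/
open Filter Set MeasureTheory
open scoped ENNReal NNReal

namespace Paper

/-!
A cluster of mass `m` has the same hull as a finite set of its points, its witness, built from
singletons of mass `1` by gluing sets of masses `m₁, m₂ > k` at distance less than `M ^ (k + 1)`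
into one of mass `m₁ + m₂ - k`. Decomposing a witness along its last gluing bounds the expected
number of witnesses of mass `m` with a given least element recursively, by
`(2 * M) ^ (-m) / (16 * M * m ^ 2)`, where the factor `m ^ (-2)` survives the convolution over
`m₁ + m₂ = m + k`. A witness of mass `m` has diameter at most `m * M ^ m`, so by Borel–Cantelli,
almost surely, witnesses of only finitely many masses have a given point `x` in their hull.
Hence the masses of the clusters containing `x` are bounded. Runs are finite, because gluing
longer and longer initial segments of an infinite run would give witnesses of unbounded mass
around its first cluster. Levels are bounded as well, since a cluster of level `k + 1` has mass at
least `k + 2`.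
-/

open Finset.HasAntidiagonal (antidiagonal)

/-! ### Witnesses -/

/-- `F₁` lies to the left of `F₂`, at distance less than `t`. -/
structure Glueable (t : ℕ) (F₁ F₂ : Finset ℕ) : Prop where
  lt : ∀ x ∈ F₁, ∀ y ∈ F₂, x < y
  gap : ∃ x ∈ F₁, ∃ y ∈ F₂, y < x + t

/-- `Witness M m F`: the finite set `F` is the set of points of a binary tree certifying a cluster
of mass `m` in the grouping construction with spacing parameter `M`. Gluing along a `(k + 1)`-run
is the binary case of the mass formula; the level `k` itself is not recorded. -/
inductive Witness (M : ℕ) : ℕ → Finset ℕ → Prop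
  | singleton (x : ℕ) : Witness M 1 {x}
  | glue {k m m₁ m₂ : ℕ} {F₁ F₂ : Finset ℕ} (hk₁ : k < m₁) (hk₂ : k < m₂) (hm : m + k = m₁ + m₂)
      (h₁ : Witness M m₁ F₁) (h₂ : Witness M m₂ F₂) (h : Glueable (M ^ (k + 1)) F₁ F₂) :
      Witness M m (F₁ ∪ F₂)

/-- The smallest interval containing `F`; it is empty if `F` is. -/
def hull (F : Finset ℕ) : Set ℕ := {x | (∃ a ∈ F, a ≤ x) ∧ ∃ b ∈ F, x ≤ b}

lemma Glueable.disjoint {t : ℕ} {F₁ F₂ : Finset ℕ} (h : Glueable t F₁ F₂) : Disjoint F₁ F₂ :=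
  Finset.disjoint_left.2 fun x h₁ h₂ => lt_irrefl x (h.lt x h₁ x h₂)

section

variable {M m : ℕ} {F : Finset ℕ}

lemma Witness.nonempty (h : Witness M m F) : F.Nonempty := by
  induction h with
  | singleton x => exact Finset.singleton_nonempty x
  | glue _ _ _ _ _ _ ih₁ _ => exact ih₁.mono Finset.subset_union_left

lemma mul_pow_add_mul_pow_add_pow_le {k a b : ℕ} (hM : 2 ≤ M) (ha : k < a) (hb : k < b)
    (hm : m + k = a + b) : a * M ^ a + b * M ^ b + M ^ (k + 1) ≤ m * M ^ m := by
  calc a * M ^ a + b * M ^ b + M ^ (k + 1)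
      ≤ a * M ^ (m - 1) + b * M ^ (m - 1) + M ^ (m - 1) := by
        gcongr <;> omega
    _ = (m + k + 1) * M ^ (m - 1) := by rw [hm]; ring
    _ ≤ (m * M) * M ^ (m - 1) := by
        gcongr
        nlinarith
    _ = m * M ^ m := by rw [mul_assoc, mul_pow_sub_one (by omega)]

lemma Witness.le_add_mul_pow (h : Witness M m F) :
    ∀ x ∈ F, ∀ y ∈ F, y ≤ x + m * M ^ m := by
  induction h with
  | singleton x => simp
  | @glue k m m₁ m₂ F₁ F₂ hk₁ hk₂ hm _ _ hF ih₁ ih₂ =>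
    obtain ⟨a, ha, b, hb, hab⟩ := hF.gap
    have hM : 2 ≤ M := by
      by_contra! hM
      have : M ^ (k + 1) ≤ 1 := pow_le_one' (by omega) _
      have := hF.lt a ha b hb
      omega
    have hmass := mul_pow_add_mul_pow_add_pow_le hM hk₁ hk₂ hm
    intro x hx y hy
    rcases Finset.mem_union.1 hx with hx | hx <;> rcases Finset.mem_union.1 hy with hy | hy
    · have := ih₁ x hx y hy
      omega
    · have := ih₁ x hx a ha
      have := ih₂ b hb y hy
      omega
    · have := hF.lt y hy x hx
      omega
    · have := ih₂ x hx y hy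
      omega

end

/-! ### Weights of families of witnesses -/

section

variable {q C : ℝ≥0∞} {t : ℕ} {𝓐 𝓑 : Set (Finset ℕ)}

/-- The expected number of members of `𝓕` contained in a random set which contains each given
finite set `F` with probability `q ^ #F`. -/
noncomputable def weight (q : ℝ≥0∞) (𝓕 : Set (Finset ℕ)) : ℝ≥0∞ := ∑' F : 𝓕, q ^ F.1.card

lemma weight_mono (h : 𝓐 ⊆ 𝓑) : weight q 𝓐 ≤ weight q 𝓑 :=
  ENNReal.tsum_mono_subtype (fun F : Finset ℕ => q ^ F.card) h

lemma weight_singleton (F : Finset ℕ) : weight q {F} = q ^ F.card :=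
  tsum_singleton F fun F : Finset ℕ => q ^ F.card

lemma weight_biUnion_finset_le {ι : Type*} (s : Finset ι) (𝓕 : ι → Set (Finset ℕ)) :
    weight q (⋃ i ∈ s, 𝓕 i) ≤ ∑ i ∈ s, weight q (𝓕 i) :=
  ENNReal.tsum_biUnion_le (fun F : Finset ℕ => q ^ F.card) s 𝓕

lemma weight_biUnion_le (𝓕 : Finset ℕ → Set (Finset ℕ)) :
    weight q (⋃ F ∈ 𝓐, 𝓕 F) ≤ ∑' F : 𝓐, weight q (𝓕 F) := by
  rw [biUnion_eq_iUnion]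
  exact ENNReal.tsum_iUnion_le_tsum (fun F : Finset ℕ => q ^ F.card) fun F : 𝓐 => 𝓕 F

lemma weight_image_union_left {F₁ : Finset ℕ} (h : ∀ F ∈ 𝓑, Disjoint F₁ F) :
    weight q ((F₁ ∪ ·) '' 𝓑) = q ^ F₁.card * weight q 𝓑 := by
  have hinj : InjOn (F₁ ∪ ·) 𝓑 := fun F hF G hG hFG => by
    rw [← (h F hF).sup_sdiff_cancel_left, ← (h G hG).sup_sdiff_cancel_left]
    exact congrArg (· \ F₁) hFG
  rw [weight, tsum_image (fun F : Finset ℕ => q ^ F.card) hinj, weight, ← ENNReal.tsum_mul_left]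
  exact tsum_congr fun F => by rw [Finset.card_union_of_disjoint (h F F.2), pow_add]

lemma Glueable.isLeast_mem_Ico {F₁ F₂ : Finset ℕ} {s : ℕ} (h : Glueable t F₁ F₂)
    (hs : IsLeast (F₂ : Set ℕ) s) : s ∈ Finset.Ico (F₁.sup id) (F₁.sup id + t) := by
  obtain ⟨x, hx, y, hy, hxy⟩ := h.gap
  have hxs : x ≤ F₁.sup id := Finset.le_sup (f := id) hx
  have hsy : s ≤ y := hs.2 hy
  refine Finset.mem_Ico.2 ⟨Finset.sup_le fun z hz => (h.lt z hz s hs.1).le, by omega⟩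

lemma weight_glued_le (h𝓑 : ∀ F ∈ 𝓑, F.Nonempty)
    (hC : ∀ s, weight q {F ∈ 𝓑 | IsLeast (F : Set ℕ) s} ≤ C) :
    weight q {F | ∃ F₁ ∈ 𝓐, ∃ F₂ ∈ 𝓑, Glueable t F₁ F₂ ∧ F = F₁ ∪ F₂} ≤
      weight q 𝓐 * (t * C) := by
  let 𝓑' (F₁ : Finset ℕ) (s : ℕ) := {F ∈ 𝓑 | Glueable t F₁ F ∧ IsLeast (F : Set ℕ) s}
  have hcover : {F | ∃ F₁ ∈ 𝓐, ∃ F₂ ∈ 𝓑, Glueable t F₁ F₂ ∧ F = F₁ ∪ F₂} ⊆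
      ⋃ F₁ ∈ 𝓐, ⋃ s ∈ Finset.Ico (F₁.sup id) (F₁.sup id + t), (F₁ ∪ ·) '' 𝓑' F₁ s := by
    rintro _ ⟨F₁, h₁, F₂, h₂, h, rfl⟩
    have hs := F₂.isLeast_min' (h𝓑 F₂ h₂)
    exact mem_biUnion h₁ (mem_biUnion (h.isLeast_mem_Ico hs) ⟨F₂, ⟨h₂, h, hs⟩, rfl⟩)
  have hterm (F₁ : Finset ℕ) (s : ℕ) :
      weight q ((F₁ ∪ ·) '' 𝓑' F₁ s) ≤ q ^ F₁.card * C := by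
    rw [weight_image_union_left fun F hF => hF.2.1.disjoint]
    gcongr
    exact (weight_mono (𝓑 := {F ∈ 𝓑 | IsLeast (F : Set ℕ) s}) fun F hF => ⟨hF.1, hF.2.2⟩).trans
      (hC s)
  calc weight q {F | ∃ F₁ ∈ 𝓐, ∃ F₂ ∈ 𝓑, Glueable t F₁ F₂ ∧ F = F₁ ∪ F₂}
      ≤ ∑' F₁ : 𝓐, weight q (⋃ s ∈ Finset.Ico (F₁.1.sup id) (F₁.1.sup id + t),
          (F₁.1 ∪ ·) '' 𝓑' F₁ s) := (weight_mono hcover).trans (weight_biUnion_le _)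
    _ ≤ ∑' F₁ : 𝓐, q ^ F₁.1.card * (t * C) := by
        refine ENNReal.tsum_le_tsum fun F₁ => (weight_biUnion_finset_le _ _).trans ?_
        refine (Finset.sum_le_card_nsmul _ _ _ fun s _ => hterm F₁ s).trans_eq ?_
        rw [Nat.card_Ico, Nat.add_sub_cancel_left, nsmul_eq_mul, mul_left_comm]
    _ = weight q 𝓐 * (t * C) := ENNReal.tsum_mul_right

end

/-- The witnesses of mass `m` with least element `s`. -/
def witnessesFrom (M m s : ℕ) : Set (Finset ℕ) := {F | Witness M m F ∧ IsLeast (F : Set ℕ) s}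

lemma witnessesFrom_one_subset (M s : ℕ) : witnessesFrom M 1 s ⊆ {{s}} := by
  rintro F ⟨hF, hs⟩
  cases hF with
  | singleton x =>
    rw [Finset.coe_singleton] at hs
    rw [hs.unique isLeast_singleton, mem_singleton_iff]
  | glue => omega

lemma Glueable.isLeast_left {t s : ℕ} {F₁ F₂ : Finset ℕ} (h : Glueable t F₁ F₂)
    (hs : IsLeast (↑(F₁ ∪ F₂) : Set ℕ) s) : IsLeast (F₁ : Set ℕ) s := by
  rw [Finset.coe_union] at hs
  refine ⟨hs.1.resolve_right fun hs₂ => ?_, fun x hx => hs.2 (Or.inl hx)⟩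
  obtain ⟨x, hx, -⟩ := h.gap
  exact (h.lt x hx s hs₂).not_ge (hs.2 (Or.inl hx))

/-- The pairs of masses which combine to the mass `m` in a gluing of level `k + 1`. -/
def massPairs (m k : ℕ) : Finset (ℕ × ℕ) :=
  {x ∈ antidiagonal (m + k) | k < x.1 ∧ k < x.2}

lemma lt_of_mem_massPairs {m k : ℕ} {x : ℕ × ℕ} (hx : x ∈ massPairs m k) :
    k < m ∧ x.1 < m ∧ x.2 < m := by
  obtain ⟨hsum, h₁, h₂⟩ := Finset.mem_filter.1 hx
  rw [Finset.HasAntidiagonal.mem_antidiagonal] at hsum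
  omega

lemma witnessesFrom_subset {M m s : ℕ} (hm : m ≠ 1) :
    witnessesFrom M m s ⊆ ⋃ k ∈ Finset.range m, ⋃ x ∈ massPairs m k,
      {F | ∃ F₁ ∈ witnessesFrom M x.1 s, ∃ F₂ ∈ {F | Witness M x.2 F},
        Glueable (M ^ (k + 1)) F₁ F₂ ∧ F = F₁ ∪ F₂} := by
  rintro F ⟨hF, hs⟩
  cases hF with
  | singleton => exact absurd rfl hm
  | @glue k _ m₁ m₂ F₁ F₂ hk₁ hk₂ hmass h₁ h₂ h =>
    have hx : (m₁, m₂) ∈ massPairs m k :=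
      Finset.mem_filter.2 ⟨Finset.HasAntidiagonal.mem_antidiagonal.2 hmass.symm, hk₁, hk₂⟩
    exact mem_biUnion (Finset.mem_range.2 (lt_of_mem_massPairs hx).1) <| mem_biUnion hx
      ⟨F₁, ⟨h₁, h.isLeast_left hs⟩, F₂, h₂, h, rfl⟩

/-- A solution of the recursive inequality `sum_massPairs_weightBound_le`. The quadratic denominator
absorbs convolution; `weightBound M 0 = 0` since division by zero yields zero. -/
noncomputable def weightBound (M m : ℕ) : ℝ≥0 := (2 * M : ℝ≥0)⁻¹ ^ m / (16 * M * m ^ 2)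

lemma sum_range_inv_sq_le (n : ℕ) : ∑ i ∈ Finset.range n, ((i : ℝ) ^ 2)⁻¹ ≤ 2 := by
  rcases n.eq_zero_or_pos with rfl | hn
  · simp
  rw [Finset.range_eq_Ico, ← Finset.add_sum_Ioo_eq_sum_Ico hn]
  simpa using sum_Ioo_inv_sq_le (α := ℝ) 0 n

lemma sum_antidiagonal_inv_sq_mul_inv_sq_le (n : ℕ) :
    ∑ x ∈ antidiagonal n, ((x.1 : ℝ) ^ 2)⁻¹ * ((x.2 : ℝ) ^ 2)⁻¹ ≤ 8 / n ^ 2 := by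
  have hterm : ∀ x ∈ antidiagonal n, ((x.1 : ℝ) ^ 2)⁻¹ * ((x.2 : ℝ) ^ 2)⁻¹ ≤
      2 / n ^ 2 * (((x.1 : ℝ) ^ 2)⁻¹ + ((x.2 : ℝ) ^ 2)⁻¹) := by
    rintro ⟨i, j⟩ hij
    rw [Finset.HasAntidiagonal.mem_antidiagonal] at hij
    rcases i.eq_zero_or_pos with rfl | hi
    · rw [Nat.cast_zero, zero_pow two_ne_zero, inv_zero, zero_mul]
      positivity
    rcases j.eq_zero_or_pos with rfl | hj
    · rw [Nat.cast_zero, zero_pow two_ne_zero, inv_zero, mul_zero]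
      positivity
    have hsum : (n : ℝ) = i + j := by exact_mod_cast hij.symm
    rw [hsum]
    field_simp
    nlinarith [sq_nonneg ((i : ℝ) - j)]
  have hsum : ∑ x ∈ antidiagonal n, ((x.1 : ℝ) ^ 2)⁻¹ ≤ 2 := by
    rw [Finset.Nat.sum_antidiagonal_eq_sum_range_succ_mk]
    exact sum_range_inv_sq_le _
  have hsum' : ∑ x ∈ antidiagonal n, ((x.2 : ℝ) ^ 2)⁻¹ ≤ 2 :=
    (Finset.Nat.sum_antidiagonal_swap (f := fun x => ((x.1 : ℝ) ^ 2)⁻¹)).trans_le hsum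
  calc ∑ x ∈ antidiagonal n, ((x.1 : ℝ) ^ 2)⁻¹ * ((x.2 : ℝ) ^ 2)⁻¹
      ≤ 2 / n ^ 2 * (∑ x ∈ antidiagonal n, ((x.1 : ℝ) ^ 2)⁻¹ +
          ∑ x ∈ antidiagonal n, ((x.2 : ℝ) ^ 2)⁻¹) := by
        rw [← Finset.sum_add_distrib, Finset.mul_sum]
        exact Finset.sum_le_sum hterm
    _ ≤ 2 / n ^ 2 * (2 + 2) := by gcongr
    _ = 8 / n ^ 2 := by ring

lemma weightBound_mul_pow_mul_weightBound {M m k i j : ℕ} (hM : M ≠ 0) (h : m + k = i + j) :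
    (weightBound M i * M ^ (k + 1) * weightBound M j : ℝ) =
      (2 * M : ℝ)⁻¹ ^ m / (256 * M) * (1 / 2) ^ k * (((i : ℝ) ^ 2)⁻¹ * ((j : ℝ) ^ 2)⁻¹) := by
  have hpow : (2 * M : ℝ)⁻¹ ^ i * (2 * M : ℝ)⁻¹ ^ j * M ^ k = (2 * M : ℝ)⁻¹ ^ m * (1 / 2) ^ k := by
    rw [← pow_add, ← h, pow_add, mul_assoc, ← mul_pow]
    congr 2
    field_simp
  calc (weightBound M i * M ^ (k + 1) * weightBound M j : ℝ)
      = (2 * M : ℝ)⁻¹ ^ i * (2 * M : ℝ)⁻¹ ^ j * M ^ k / (256 * M) *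
          (((i : ℝ) ^ 2)⁻¹ * ((j : ℝ) ^ 2)⁻¹) := by
        simp only [weightBound, NNReal.coe_div, NNReal.coe_mul, NNReal.coe_pow, NNReal.coe_inv,
          NNReal.coe_ofNat, NNReal.coe_natCast]
        field_simp
        ring
    _ = _ := by rw [hpow]; ring

lemma sum_massPairs_weightBound_le {M : ℕ} (hM : M ≠ 0) (m : ℕ) :
    ∑ k ∈ Finset.range m, ∑ x ∈ massPairs m k,
      weightBound M x.1 * (M ^ (k + 1) * weightBound M x.2) ≤ weightBound M m := by
  have hlevel : ∀ k ∈ Finset.range m, (∑ x ∈ massPairs m k,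
      weightBound M x.1 * (M ^ (k + 1) * weightBound M x.2) : ℝ) ≤
        (2 * M : ℝ)⁻¹ ^ m / (32 * M * m ^ 2) * (1 / 2) ^ k := by
    intro k hk
    have hm : 0 < m := Nat.zero_lt_of_lt (Finset.mem_range.1 hk)
    calc (∑ x ∈ massPairs m k, weightBound M x.1 * (M ^ (k + 1) * weightBound M x.2) : ℝ)
        = ∑ x ∈ massPairs m k, (2 * M : ℝ)⁻¹ ^ m / (256 * M) * (1 / 2) ^ k *
            (((x.1 : ℝ) ^ 2)⁻¹ * ((x.2 : ℝ) ^ 2)⁻¹) := by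
          refine Finset.sum_congr rfl fun x hx => ?_
          rw [← mul_assoc, weightBound_mul_pow_mul_weightBound hM
            (Finset.HasAntidiagonal.mem_antidiagonal.1 (Finset.filter_subset _ _ hx)).symm]
      _ ≤ (2 * M : ℝ)⁻¹ ^ m / (256 * M) * (1 / 2) ^ k * (8 / ((m + k : ℕ) : ℝ) ^ 2) := by
          rw [← Finset.mul_sum]
          gcongr
          refine le_trans ?_ (sum_antidiagonal_inv_sq_mul_inv_sq_le _)
          exact Finset.sum_le_sum_of_subset_of_nonneg (Finset.filter_subset _ _)
            fun x _ _ => by positivity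
      _ ≤ (2 * M : ℝ)⁻¹ ^ m / (256 * M) * (1 / 2) ^ k * (8 / (m : ℝ) ^ 2) := by
          gcongr
          exact Nat.le_add_right m k
      _ = (2 * M : ℝ)⁻¹ ^ m / (32 * M * m ^ 2) * (1 / 2) ^ k := by ring
  rw [← NNReal.coe_le_coe]
  push_cast
  calc (∑ k ∈ Finset.range m, ∑ x ∈ massPairs m k,
        weightBound M x.1 * (M ^ (k + 1) * weightBound M x.2) : ℝ)
      ≤ (2 * M : ℝ)⁻¹ ^ m / (32 * M * m ^ 2) * ∑ k ∈ Finset.range m, (1 / 2) ^ k := by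
        rw [Finset.mul_sum]
        exact Finset.sum_le_sum hlevel
    _ ≤ (2 * M : ℝ)⁻¹ ^ m / (32 * M * m ^ 2) * 2 := by
        gcongr
        exact sum_geometric_two_le m
    _ = weightBound M m := by
        simp only [weightBound, NNReal.coe_div, NNReal.coe_mul, NNReal.coe_pow, NNReal.coe_inv,
          NNReal.coe_ofNat, NNReal.coe_natCast]
        ring

lemma weightBound_one (M : ℕ) : weightBound M 1 = (32 * M ^ 2 : ℝ≥0)⁻¹ := by
  simp only [weightBound, pow_one, Nat.cast_one, one_pow, mul_one, div_eq_mul_inv, ← mul_inv]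
  ring_nf

lemma weight_witnessesFrom_le {M : ℕ} (hM : M ≠ 0) {q : ℝ≥0∞} (hq : 32 * M ^ 2 * q ≤ 1)
    (m s : ℕ) : weight q (witnessesFrom M m s) ≤ weightBound M m := by
  induction m using Nat.strong_induction_on generalizing s with
  | _ m ih =>
    rcases eq_or_ne m 1 with rfl | hm
    · calc weight q (witnessesFrom M 1 s) ≤ weight q {{s}} :=
            weight_mono (witnessesFrom_one_subset M s)
        _ = q := by rw [weight_singleton, Finset.card_singleton, pow_one]
        _ ≤ (32 * (M : ℝ≥0∞) ^ 2)⁻¹ := ENNReal.le_inv_iff_mul_le.2 (by rwa [mul_comm])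
        _ = weightBound M 1 := by
          rw [weightBound_one, ENNReal.coe_inv (by positivity)]
          push_cast
          rfl
    · refine (weight_mono (witnessesFrom_subset hm)).trans <|
        (weight_biUnion_finset_le _ _).trans ?_
      refine le_trans ?_ (ENNReal.coe_le_coe.2 (sum_massPairs_weightBound_le hM m))
      push_cast
      refine Finset.sum_le_sum fun k _ => (weight_biUnion_finset_le _ _).trans <|
        Finset.sum_le_sum fun x hx => ?_
      obtain ⟨-, h₁, h₂⟩ := lt_of_mem_massPairs hx
      refine (weight_glued_le (fun F hF => hF.nonempty) (ih x.2 h₂)).trans ?_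
      push_cast
      gcongr
      exact ih x.1 h₁ s

/-! ### Almost sure tameness -/

/-- Only finitely many masses occur among the witnesses inside `Γ` whose hull contains a given
point. -/
def IsTame (M : ℕ) (Γ : Set ℕ) : Prop :=
  ∀ x, ∀ᶠ m in atTop, ∀ F, Witness M m F → (F : Set ℕ) ⊆ Γ → x ∉ hull F

lemma weightBound_mul_le {M : ℕ} (hM : M ≠ 0) (m : ℕ) :
    ((m * M ^ m + 1 : ℕ) : ℝ≥0) * weightBound M m ≤ (1 / 2) ^ m := by
  rcases m.eq_zero_or_pos with rfl | hm
  · simp [weightBound]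
  have hcount : m * M ^ m + 1 ≤ M ^ m * (16 * M * m ^ 2) := by
    have hpow : 1 ≤ M ^ m := Nat.one_le_pow _ _ (Nat.pos_of_ne_zero hM)
    have hm2 : m ≤ M * m ^ 2 :=
      (Nat.le_self_pow two_ne_zero m).trans (Nat.le_mul_of_pos_left _ (Nat.pos_of_ne_zero hM))
    calc m * M ^ m + 1 ≤ M ^ m * (m + 1) := by linarith
      _ ≤ M ^ m * (16 * M * m ^ 2) := Nat.mul_le_mul_left _ (by linarith)
  calc ((m * M ^ m + 1 : ℕ) : ℝ≥0) * weightBound M m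
      ≤ ((M ^ m * (16 * M * m ^ 2) : ℕ) : ℝ≥0) * weightBound M m := by gcongr
    _ = (1 / 2) ^ m := by
        rw [weightBound, Nat.cast_mul, Nat.cast_pow, mul_assoc]
        push_cast
        rw [mul_div_cancel₀ _ (by positivity), ← mul_pow]
        congr 1
        field_simp

section

variable {Ω : Type*} [MeasurableSpace Ω] {μ : Measure Ω} {Γ : Ω → Set ℕ} {M : ℕ} {q : ℝ≥0∞}

lemma measure_exists_witnessesFrom_subset_le
    (hΓ : ∀ F : Finset ℕ, μ {ω | ↑F ⊆ Γ ω} ≤ q ^ F.card) (m s : ℕ) :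
    μ {ω | ∃ F ∈ witnessesFrom M m s, ↑F ⊆ Γ ω} ≤ weight q (witnessesFrom M m s) := by
  have hunion : {ω | ∃ F ∈ witnessesFrom M m s, ↑F ⊆ Γ ω} =
      ⋃ F : witnessesFrom M m s, {ω | ↑F.1 ⊆ Γ ω} := by
    ext ω
    simp
  rw [hunion]
  exact (measure_iUnion_le _).trans (ENNReal.tsum_le_tsum fun F => hΓ F)

lemma Witness.exists_mem_Icc_isLeast {m x : ℕ} {F : Finset ℕ} (hF : Witness M m F)
    (hx : x ∈ hull F) : ∃ s ∈ Finset.Icc (x - m * M ^ m) x, IsLeast (F : Set ℕ) s := by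
  have hs := F.isLeast_min' hF.nonempty
  obtain ⟨⟨a, ha, hax⟩, b, hb, hxb⟩ := hx
  have hsa := hs.2 ha
  have hbs := hF.le_add_mul_pow _ hs.1 b hb
  exact ⟨_, Finset.mem_Icc.2 (by omega), hs⟩

lemma measure_exists_witness_hull_le (hM : M ≠ 0) (hq : 32 * M ^ 2 * q ≤ 1)
    (hΓ : ∀ F : Finset ℕ, μ {ω | ↑F ⊆ Γ ω} ≤ q ^ F.card) (m x : ℕ) :
    μ {ω | ∃ F, Witness M m F ∧ ↑F ⊆ Γ ω ∧ x ∈ hull F} ≤ ((1 / 2 : ℝ≥0) ^ m : ℝ≥0) := by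
  have hcover : {ω | ∃ F, Witness M m F ∧ ↑F ⊆ Γ ω ∧ x ∈ hull F} ⊆
      ⋃ s ∈ Finset.Icc (x - m * M ^ m) x, {ω | ∃ F ∈ witnessesFrom M m s, ↑F ⊆ Γ ω} := by
    rintro ω ⟨F, hF, hFΓ, hx⟩
    obtain ⟨s, hs, hleast⟩ := hF.exists_mem_Icc_isLeast hx
    exact mem_biUnion hs ⟨F, ⟨hF, hleast⟩, hFΓ⟩
  have hcard : (Finset.Icc (x - m * M ^ m) x).card ≤ m * M ^ m + 1 := by
    rw [Nat.card_Icc]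
    omega
  calc μ {ω | ∃ F, Witness M m F ∧ ↑F ⊆ Γ ω ∧ x ∈ hull F}
      ≤ ∑ s ∈ Finset.Icc (x - m * M ^ m) x, μ {ω | ∃ F ∈ witnessesFrom M m s, ↑F ⊆ Γ ω} :=
        (measure_mono hcover).trans (measure_biUnion_finset_le _ _)
    _ ≤ ∑ _ ∈ Finset.Icc (x - m * M ^ m) x, (weightBound M m : ℝ≥0∞) :=
        Finset.sum_le_sum fun _ _ => (measure_exists_witnessesFrom_subset_le hΓ m _).trans
          (weight_witnessesFrom_le hM hq m _)
    _ ≤ ((m * M ^ m + 1 : ℕ) : ℝ≥0∞) * weightBound M m := by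
        rw [Finset.sum_const, nsmul_eq_mul]
        gcongr
    _ ≤ ((1 / 2 : ℝ≥0) ^ m : ℝ≥0) := by exact_mod_cast weightBound_mul_le hM m

lemma ae_isTame (hM : M ≠ 0) (hq : 32 * M ^ 2 * q ≤ 1)
    (hΓ : ∀ F : Finset ℕ, μ {ω | ↑F ⊆ Γ ω} ≤ q ^ F.card) : ∀ᵐ ω ∂μ, IsTame M (Γ ω) := by
  refine ae_all_iff.2 fun x => ?_
  have hsummable : Summable fun m : ℕ => (1 / 2 : ℝ≥0) ^ m :=
    NNReal.summable_coe.1 (by simpa using summable_geometric_two)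
  have hsum : ∑' m, μ {ω | ∃ F, Witness M m F ∧ ↑F ⊆ Γ ω ∧ x ∈ hull F} ≠ ∞ :=
    ne_top_of_le_ne_top (ENNReal.tsum_coe_ne_top_iff_summable.2 hsummable)
      (ENNReal.tsum_le_tsum fun m => measure_exists_witness_hull_le hM hq hΓ m x)
  filter_upwards [ae_eventually_notMem hsum] with ω hω
  exact hω.mono fun m hm F hF hFΓ hx => hm ⟨F, hF, hFΓ, hx⟩

end

/-! ### Ordered collections of clusters and their runs -/

/-- The start-point of a cluster; `0` if the cluster is empty. -/
noncomputable def start (c : Clu) : ℕ := sInf c.1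

/-- A collection of nonempty clusters any two of which lie entirely on one side of each other. -/
structure IsOrdered (B : Set Clu) : Prop where
  nonempty : ∀ c ∈ B, c.1.Nonempty
  comparable : B.Pairwise fun c d => cluLT c.1 d.1 ∨ cluLT d.1 c.1

/-- Consecutive clusters of `T` are at distance less than `t`. Consecutiveness is encoded by
requiring, for all `c` to the left of `e`, a cluster of `T` close to `c` and not beyond `e`. -/
def Linked (t : ℕ) (T : Set Clu) : Prop :=
  ∀ c ∈ T, ∀ e ∈ T, start c < start e →
    ∃ v ∈ T, start c < start v ∧ start v ≤ start e ∧ cluDist c.1 v.1 < t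

lemma cluLT.mono {C C' D D' : Set ℕ} (h : cluLT C D) (hC : C' ⊆ C) (hD : D' ⊆ D) : cluLT C' D' :=
  fun a ha b hb => h a (hC ha) b (hD hb)

lemma cluDist_comm (C D : Set ℕ) : cluDist C D = cluDist D C := by
  have hset : {d | ∃ a ∈ C, ∃ b ∈ D, d = Nat.dist a b} = {d | ∃ a ∈ D, ∃ b ∈ C, d = Nat.dist a b} :=
    Set.ext fun d => ⟨fun ⟨a, ha, b, hb, h⟩ => ⟨b, hb, a, ha, h.trans (Nat.dist_comm a b)⟩,
      fun ⟨a, ha, b, hb, h⟩ => ⟨b, hb, a, ha, h.trans (Nat.dist_comm a b)⟩⟩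
  rw [cluDist, hset, cluDist]

lemma cluLT.exists_lt_add_of_cluDist_lt {C D : Set ℕ} {t : ℕ} (h : cluLT C D) (hC : C.Nonempty)
    (hD : D.Nonempty) (hdist : cluDist C D < t) : ∃ a ∈ C, ∃ b ∈ D, b < a + t := by
  obtain ⟨x, hx⟩ := hC
  obtain ⟨y, hy⟩ := hD
  obtain ⟨a, ha, b, hb, hab⟩ := Nat.sInf_mem (s := {d | ∃ a ∈ C, ∃ b ∈ D, d = Nat.dist a b})
    ⟨_, x, hx, y, hy, rfl⟩
  rw [cluDist, hab, Nat.dist_eq_sub_of_le (h a ha b hb).le] at hdist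
  exact ⟨a, ha, b, hb, by omega⟩

section

variable {B T : Set Clu} {t : ℕ} {c d p q u v : Clu}

lemma IsOrdered.mono (hB : IsOrdered B) (h : T ⊆ B) : IsOrdered T :=
  ⟨fun c hc => hB.nonempty c (h hc), hB.comparable.mono h⟩

lemma IsOrdered.start_mem (hB : IsOrdered B) (hc : c ∈ B) : start c ∈ c.1 :=
  Nat.sInf_mem (hB.nonempty c hc)

lemma IsOrdered.cluLT_iff (hB : IsOrdered B) (hc : c ∈ B) (hd : d ∈ B) :
    cluLT c.1 d.1 ↔ start c < start d := by
  have hlt {c d : Clu} (hc : c ∈ B) (hd : d ∈ B) (h : cluLT c.1 d.1) : start c < start d :=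
    h _ (hB.start_mem hc) _ (hB.start_mem hd)
  refine ⟨hlt hc hd, fun h => ?_⟩
  have hne : c ≠ d := fun hcd => h.ne (congrArg start hcd)
  exact (hB.comparable hc hd hne).resolve_right fun h' => h.not_gt (hlt hd hc h')

lemma IsOrdered.injOn_start (hB : IsOrdered B) : InjOn start B := by
  intro c hc d hd h
  by_contra hne
  rcases hB.comparable hc hd hne with h' | h'
  · exact ((hB.cluLT_iff hc hd).1 h').ne h
  · exact ((hB.cluLT_iff hd hc).1 h').ne h.symm

instance adjStep_symm : Std.Symm (adjStep B t) where
  symm _ _ h := ⟨h.2.1, h.1, cluDist_comm _ _ ▸ h.2.2.1, h.2.2.2.symm⟩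

lemma runOf_eq_of_mem (h : q ∈ runOf B t p) : runOf B t q = runOf B t p :=
  Set.ext fun _ => ⟨fun hr => ⟨hr.1, h.2.trans hr.2⟩, fun hr => ⟨hr.1, (symm h.2).trans hr.2⟩⟩

lemma IsOrdered.start_le_of_adjStep (hB : IsOrdered B) (h : adjStep B t p q) (hc : c ∈ B)
    (hpc : start p < start c) : start q ≤ start c := by
  by_contra! hcq
  obtain ⟨hp, hq, -, ⟨-, hbetween⟩ | ⟨hqp, -⟩⟩ := h
  · exact hbetween c hc ⟨(hB.cluLT_iff hp hc).2 hpc, (hB.cluLT_iff hc hq).2 hcq⟩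
  · exact (hpc.trans hcq).not_gt ((hB.cluLT_iff hq hp).1 hqp)

lemma IsOrdered.exists_adjStep_of_lt (hB : IsOrdered B) (hc : c ∈ B)
    (h : Relation.ReflTransGen (adjStep B t) p q) (hpc : start p ≤ start c)
    (hcq : start c < start q) :
    Relation.ReflTransGen (adjStep B t) p c ∧ ∃ v, adjStep B t c v ∧ start c < start v := by
  induction h with
  | refl => exact absurd hcq hpc.not_gt
  | @tail b q hpb hbq ih =>
    rcases lt_trichotomy (start c) (start b) with hcb | hcb | hbc
    · exact ih hcb
    · obtain rfl := hB.injOn_start hc hbq.1 hcb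
      exact ⟨hpb, q, hbq, hcq⟩
    · exact absurd hcq (hB.start_le_of_adjStep hbq hc hbc).not_gt

lemma IsOrdered.mem_runOf_of_between (hB : IsOrdered B) (hc : c ∈ B) (hu : u ∈ runOf B t p)
    (hv : v ∈ runOf B t p) (huc : start u ≤ start c) (hcv : start c ≤ start v) :
    c ∈ runOf B t p := by
  rcases hcv.eq_or_lt with h | h
  · rwa [hB.injOn_start hc hv.1 h]
  · have huv : Relation.ReflTransGen (adjStep B t) u v := (symm hu.2).trans hv.2
    exact ⟨hc, hu.2.trans (hB.exists_adjStep_of_lt hc huv huc h).1⟩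

lemma IsOrdered.linked_runOf (hB : IsOrdered B) : Linked t (runOf B t p) := by
  intro c hc e he hce
  have hpath : Relation.ReflTransGen (adjStep B t) c e := (symm hc.2).trans he.2
  obtain ⟨-, v, hcv, hlt⟩ := hB.exists_adjStep_of_lt hc.1 hpath le_rfl hce
  exact ⟨v, ⟨hcv.2.1, hc.2.tail hcv⟩, hlt, hB.start_le_of_adjStep hcv he.1 hce, hcv.2.2.1⟩

lemma IsOrdered.cluLT_iUnion_runOf (hB : IsOrdered B) (hp : p ∈ B) (hq : q ∈ B)
    (hdisj : Disjoint (runOf B t p) (runOf B t q)) (hpq : start p < start q) :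
    cluLT (⋃ u ∈ runOf B t p, u.1) (⋃ v ∈ runOf B t q, v.1) := by
  have hpp : p ∈ runOf B t p := ⟨hp, .refl⟩
  have hqq : q ∈ runOf B t q := ⟨hq, .refl⟩
  have hleft : ∀ u ∈ runOf B t p, start u < start q := by
    intro u hu
    by_contra! hqu
    exact disjoint_left.1 hdisj (hB.mem_runOf_of_between hq hpp hu hpq.le hqu) hqq
  intro a ha b hb
  obtain ⟨u, hu, hau⟩ := mem_iUnion₂.1 ha
  obtain ⟨v, hv, hbv⟩ := mem_iUnion₂.1 hb
  refine (hB.cluLT_iff hu.1 hv.1).2 ?_ a hau b hbv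
  by_contra! hvu
  exact disjoint_left.1 hdisj hu (hB.mem_runOf_of_between hu.1 hv hqq hvu (hleft u hu).le)

lemma IsRun.subset {R : Set Clu} (hR : IsRun B t R) : R ⊆ B := by
  obtain ⟨p, -, rfl, -⟩ := hR
  exact fun _ hq => hq.1

lemma IsRun.nontrivial {R : Set Clu} (hR : IsRun B t R) : R.Nontrivial := by
  obtain ⟨p, hp, rfl, q, hq, hqp⟩ := hR
  exact ⟨q, hq, p, ⟨hp, .refl⟩, hqp⟩

lemma IsRun.linked {R : Set Clu} (hR : IsRun B t R) (hB : IsOrdered B) : Linked t R := by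
  obtain ⟨p, -, rfl, -⟩ := hR
  exact hB.linked_runOf

lemma IsRun.cluLT_or_cluLT {R R' : Set Clu} (hR : IsRun B t R) (hR' : IsRun B t R')
    (hB : IsOrdered B) (hne : R ≠ R') :
    cluLT (⋃ q ∈ R, q.1) (⋃ q ∈ R', q.1) ∨ cluLT (⋃ q ∈ R', q.1) (⋃ q ∈ R, q.1) := by
  obtain ⟨p, hp, rfl, -⟩ := hR
  obtain ⟨p', hp', rfl, -⟩ := hR'
  have hdisj : Disjoint (runOf B t p) (runOf B t p') :=
    disjoint_left.2 fun q hq hq' => hne ((runOf_eq_of_mem hq).symm.trans (runOf_eq_of_mem hq'))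
  rcases lt_trichotomy (start p) (start p') with h | h | h
  · exact Or.inl (hB.cluLT_iUnion_runOf hp hp' hdisj h)
  · exact absurd (congrArg (runOf B t) (hB.injOn_start hp hp' h)) hne
  · exact Or.inr (hB.cluLT_iUnion_runOf hp' hp hdisj.symm h)

lemma Linked.initialSegment (hT : Linked t T) (n : ℕ) : Linked t {c ∈ T | start c ≤ n} := by
  intro c hc e he hce
  obtain ⟨v, hv, hcv, hve, hdist⟩ := hT c hc.1 e he.1 hce
  exact ⟨v, ⟨hv, hve.trans he.2⟩, hcv, hve, hdist⟩

lemma Linked.of_insert (h : Linked t (insert c T)) (hmin : ∀ d ∈ T, start c ≤ start d) :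
    Linked t T := by
  intro d hd e he hde
  obtain ⟨v, hv, hdv, hve, hdist⟩ := h d (mem_insert_of_mem _ hd) e (mem_insert_of_mem _ he) hde
  have hvc : v ≠ c := fun hvc => ((hmin d hd).trans_lt hdv).ne (congrArg start hvc).symm
  exact ⟨v, hv.resolve_left hvc, hdv, hve, hdist⟩

lemma IsOrdered.cluLT_or_cluLT_of_disjoint_spanI {S R : Set Clu} (hS : IsOrdered S) (hRS : R ⊆ S)
    (hinf : sInf (⋃ q ∈ R, q.1) ∈ ⋃ q ∈ R, q.1) (hsup : sSup (⋃ q ∈ R, q.1) ∈ ⋃ q ∈ R, q.1)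
    (hc : c ∈ S) (hd : Disjoint c.1 (spanI (⋃ q ∈ R, q.1))) :
    cluLT (spanI (⋃ q ∈ R, q.1)) c.1 ∨ cluLT c.1 (spanI (⋃ q ∈ R, q.1)) := by
  have hle : sInf (⋃ q ∈ R, q.1) ≤ sSup (⋃ q ∈ R, q.1) := Nat.sInf_le hsup
  obtain ⟨u, hu, hinfu⟩ := mem_iUnion₂.1 hinf
  obtain ⟨v, hv, hsupv⟩ := mem_iUnion₂.1 hsup
  have hcu : c ≠ u := by
    rintro rfl
    exact disjoint_left.1 hd hinfu ⟨le_rfl, hle⟩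
  have hcv : c ≠ v := by
    rintro rfl
    exact disjoint_left.1 hd hsupv ⟨hle, le_rfl⟩
  rcases hS.comparable hc (hRS hu) hcu with h | huc
  · exact Or.inr fun a ha b hb => (h a ha _ hinfu).trans_le hb.1
  rcases hS.comparable hc (hRS hv) hcv with hcv | h
  · have hx := hS.start_mem hc
    exact absurd ⟨(huc _ hinfu _ hx).le, (hcv _ hx _ hsupv).le⟩ (disjoint_left.1 hd hx)
  · exact Or.inl fun a ha b hb => ha.2.trans_lt (h _ hsupv b hb)

end

lemma cluLT.spanI {U V : Set ℕ} (h : cluLT U V) (hU : sSup U ∈ U) (hV : sInf V ∈ V) :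
    cluLT (spanI U) (spanI V) :=
  fun _ ha _ hb => ha.2.trans_lt ((h _ hU _ hV).trans_le hb.1)

/-! ### Clusters are spanned by witnesses -/

/-- `F` consists of points of `C` and has the same hull as `C`. -/
def Spans (F : Finset ℕ) (C : Set ℕ) : Prop := ↑F ⊆ C ∧ C ⊆ hull F

section

variable {F F₁ F₂ : Finset ℕ} {C C₁ C₂ U Γ : Set ℕ} {t : ℕ}

lemma hull_mono (h : F₁ ⊆ F₂) : hull F₁ ⊆ hull F₂ :=
  fun _ ⟨⟨a, ha, hax⟩, b, hb, hxb⟩ => ⟨⟨a, h ha, hax⟩, b, h hb, hxb⟩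

lemma spans_singleton (x : ℕ) : Spans {x} {x} := by
  simp [Spans, hull]

lemma Spans.nonempty (h : Spans F C) (hF : F.Nonempty) : C.Nonempty := hF.to_set.mono h.1

lemma Spans.union (h₁ : Spans F₁ C₁) (h₂ : Spans F₂ C₂) : Spans (F₁ ∪ F₂) (C₁ ∪ C₂) :=
  ⟨by
    rw [Finset.coe_union]
    exact union_subset_union h₁.1 h₂.1,
  union_subset (h₁.2.trans (hull_mono Finset.subset_union_left))
    (h₂.2.trans (hull_mono Finset.subset_union_right))⟩

lemma Spans.glueable (h₁ : Spans F₁ C₁) (h₂ : Spans F₂ C₂) (hlt : cluLT C₁ C₂)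
    (hgap : ∃ a ∈ C₁, ∃ b ∈ C₂, b < a + t) : Glueable t F₁ F₂ where
  lt x hx y hy := hlt x (h₁.1 hx) y (h₂.1 hy)
  gap := by
    obtain ⟨a, ha, b, hb, hab⟩ := hgap
    obtain ⟨-, x, hx, hax⟩ := h₁.2 ha
    obtain ⟨⟨y, hy, hyb⟩, -⟩ := h₂.2 hb
    exact ⟨x, hx, y, hy, by omega⟩

lemma Spans.bddAbove (h : Spans F C) : BddAbove C :=
  ⟨F.sup id, fun _ hy =>
    let ⟨_, _, hb, hyb⟩ := h.2 hy
    hyb.trans (Finset.le_sup (f := id) hb)⟩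

lemma Spans.sInf_mem (h : Spans F C) (hF : F.Nonempty) : sInf C ∈ C :=
  Nat.sInf_mem (h.nonempty hF)

lemma Spans.sSup_mem (h : Spans F C) (hF : F.Nonempty) : sSup C ∈ C :=
  Nat.sSup_mem (h.nonempty hF) h.bddAbove

lemma Spans.spanI_inter (h : Spans F U) (hF : F.Nonempty) (hU : U ⊆ Γ) :
    Spans F (spanI U ∩ Γ) := by
  obtain ⟨⟨a, ha, hainf⟩, -⟩ := h.2 (h.sInf_mem hF)
  obtain ⟨-, b, hb, hsupb⟩ := h.2 (h.sSup_mem hF)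
  exact ⟨fun x hx => ⟨⟨Nat.sInf_le (h.1 hx), le_csSup h.bddAbove (h.1 hx)⟩, hU (h.1 hx)⟩,
    fun x hx => ⟨⟨a, ha, hainf.trans hx.1.1⟩, b, hb, hx.1.2.trans hsupb⟩⟩

end

section

variable {M k : ℕ} {Γ : Set ℕ} {S R : Set Clu}

lemma IsOrdered.glueable_insert {T : Set Clu} {c : Clu} {t : ℕ} {F₁ F₂ : Finset ℕ}
    (hT : IsOrdered (insert c T)) (hlink : Linked t (insert c T)) (hne : T.Nonempty)
    (hlt : ∀ d ∈ T, start c < start d) (h₁ : Spans F₁ c.1) (h₂ : Spans F₂ (⋃ d ∈ T, d.1)) :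
    Glueable t F₁ F₂ := by
  have hc : c ∈ insert c T := mem_insert c T
  have hleft : ∀ d ∈ T, cluLT c.1 d.1 := fun d hd =>
    (hT.cluLT_iff hc (mem_insert_of_mem c hd)).2 (hlt d hd)
  obtain ⟨d, hd⟩ := hne
  obtain ⟨v, hv, hcv, -, hdist⟩ := hlink c hc d (mem_insert_of_mem c hd) (hlt d hd)
  have hvT : v ∈ T := hv.resolve_left fun h => hcv.ne (congrArg start h).symm
  obtain ⟨a, ha, b, hb, hab⟩ :=
    (hleft v hvT).exists_lt_add_of_cluDist_lt (hT.nonempty c hc) (hT.nonempty v hv) hdist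
  refine h₁.glueable h₂ (fun x hx y hy => ?_) ⟨a, ha, b, mem_biUnion hvT hb, hab⟩
  obtain ⟨e, he, hye⟩ := mem_iUnion₂.1 hy
  exact hleft e he x hx y hye

lemma IsOrdered.exists_witness {T : Finset Clu} (hT : IsOrdered (T : Set Clu)) (hne : T.Nonempty)
    (hmass : ∀ c ∈ T, k < c.2) (hwit : ∀ c ∈ T, ∃ F, Witness M c.2 F ∧ Spans F c.1)
    (hlink : Linked (M ^ (k + 1)) (T : Set Clu)) :
    ∃ F m, Witness M m F ∧ Spans F (⋃ c ∈ T, c.1) ∧ m + k * T.card = ∑ c ∈ T, c.2 + k ∧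
      k + T.card ≤ m := by
  classical
  induction T using Finset.induction_on_min_value start with
  | empty => exact absurd hne Finset.not_nonempty_empty
  | insert c T hcT hmin ih =>
    obtain ⟨F₁, hF₁, hspans₁⟩ := hwit c (Finset.mem_insert_self c T)
    have hc := hmass c (Finset.mem_insert_self c T)
    rcases T.eq_empty_or_nonempty with rfl | hTne
    · exact ⟨F₁, c.2, hF₁, by simpa using hspans₁, by simp [add_comm], by simpa using hc⟩
    rw [Finset.coe_insert] at hT hlink
    obtain ⟨F₂, m₂, hF₂, hspans₂, hm₂, hle⟩ := ih (hT.mono (subset_insert _ _)) hTne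
      (fun d hd => hmass d (Finset.mem_insert_of_mem hd))
      (fun d hd => hwit d (Finset.mem_insert_of_mem hd)) (hlink.of_insert hmin)
    have hlt : ∀ d ∈ T, start c < start d := fun d hd => (hmin d hd).lt_of_ne fun h =>
      hcT (hT.injOn_start (mem_insert c _) (mem_insert_of_mem c hd) h ▸ hd)
    have hglue : Glueable (M ^ (k + 1)) F₁ F₂ :=
      hT.glueable_insert hlink hTne hlt hspans₁ hspans₂
    have hTcard : 0 < T.card := hTne.card_pos
    have hcard : (insert c T).card = T.card + 1 := Finset.card_insert_of_notMem hcT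
    refine ⟨F₁ ∪ F₂, c.2 + m₂ - k, .glue hc (by omega) (by omega) hF₁ hF₂ hglue, ?_, ?_, ?_⟩
    · rw [Finset.set_biUnion_insert]
      exact hspans₁.union hspans₂
    · rw [Finset.sum_insert hcT, hcard, mul_add_one]
      omega
    · omega

/-- The invariant of the grouping construction: an ordered collection of clusters contained in `Γ`,
each of them spanned by a witness of its mass. -/
structure IsWitnessed (M : ℕ) (Γ : Set ℕ) (S : Set Clu) : Prop extends IsOrdered S where
  subset : ∀ c ∈ S, c.1 ⊆ Γ
  exists_witness : ∀ c ∈ S, ∃ F, Witness M c.2 F ∧ Spans F c.1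

lemma IsWitnessed.mono (hS : IsWitnessed M Γ S) (h : R ⊆ S) : IsWitnessed M Γ R :=
  ⟨hS.toIsOrdered.mono h, fun c hc => hS.subset c (h hc), fun c hc => hS.exists_witness c (h hc)⟩

lemma IsTame.finite_of_linked (hΓ : IsTame M Γ) (hR : IsWitnessed M Γ R)
    (hmass : ∀ c ∈ R, k < c.2) (hlink : Linked (M ^ (k + 1)) R) : R.Finite := by
  classical
  by_contra hinf
  obtain ⟨p, hp⟩ := Set.Infinite.nonempty hinf
  obtain ⟨N, hN⟩ := eventually_atTop.1 (hΓ (start p))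
  obtain ⟨U, hUR, hUcard⟩ := Set.Infinite.exists_subset_card_eq hinf N
  let n := (insert p U).sup start
  have hsub : {c ∈ R | start c ≤ n} ⊆ R := fun _ hc => hc.1
  have hfin : {c ∈ R | start c ≤ n}.Finite :=
    .of_injOn (fun _ hc => hc.2) (hR.injOn_start.mono hsub) (finite_Iic n)
  obtain ⟨T, hT⟩ := hfin.exists_finset_coe
  have hTR : (T : Set Clu) ⊆ R := hT ▸ hsub
  have hmemT : ∀ c ∈ insert p U, c ∈ R → c ∈ T := fun c hc hcR =>
    Finset.mem_coe.1 (hT ▸ ⟨hcR, Finset.le_sup hc⟩)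
  have hpT : p ∈ T := hmemT p (Finset.mem_insert_self p U) hp
  have hcard : N ≤ T.card := hUcard ▸ Finset.card_le_card fun c hc =>
    hmemT c (Finset.mem_insert_of_mem hc) (hUR hc)
  obtain ⟨F, m, hF, hspans, -, hm⟩ := (hR.mono hTR).toIsOrdered.exists_witness ⟨p, hpT⟩
    (fun c hc => hmass c (hTR hc)) (fun c hc => hR.exists_witness c (hTR hc))
    (hT ▸ hlink.initialSegment n)
  refine hN m (by omega) F hF ?_ (hspans.2 (mem_biUnion hpT (hR.start_mem hp)))
  exact hspans.1.trans (iUnion₂_subset fun c hc => hR.subset c (hTR hc))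

lemma IsTame.exists_witness_runClu (hΓ : IsTame M Γ) (hS : IsWitnessed M Γ S)
    (hR : IsRun {q ∈ S | k + 1 ≤ q.2} (M ^ (k + 1)) R) :
    ∃ F, Witness M (runClu Γ k R).2 F ∧ Spans F (⋃ q ∈ R, q.1) ∧ k + 2 ≤ (runClu Γ k R).2 := by
  have hRW : IsWitnessed M Γ R := hS.mono fun q hq => (hR.subset hq).1
  have hmass : ∀ c ∈ R, k < c.2 := fun c hc => (hR.subset hc).2
  have hlink := hR.linked (hS.toIsOrdered.mono (sep_subset _ _))
  obtain ⟨T, rfl⟩ := (hΓ.finite_of_linked hRW hmass hlink).exists_finset_coe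
  have hcard : 2 ≤ T.card := Finset.one_lt_card_iff_nontrivial.2 hR.nontrivial
  obtain ⟨F, m, hF, hspans, hm, hle⟩ := hRW.toIsOrdered.exists_witness
    (Finset.card_pos.1 (by omega)) hmass hRW.exists_witness hlink
  have hrun : (runClu Γ k T).2 = m := by
    have hsum : ∑ᶠ q ∈ (T : Set Clu), q.2 = ∑ q ∈ T, q.2 := finsum_mem_coe_finset _ T
    have hTcard : Nat.card (T : Set Clu) = T.card := by simp
    rw [runClu, hsum, hTcard, Nat.mul_sub_one]
    have : k ≤ k * T.card := Nat.le_mul_of_pos_right k (by omega)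
    omega
  exact ⟨F, hrun ▸ hF, hspans, by omega⟩

lemma IsTame.runClu_cluLT_or_cluLT (hΓ : IsTame M Γ) (hS : IsWitnessed M Γ S)
    {R R' : Set Clu} (hR : IsRun {q ∈ S | k + 1 ≤ q.2} (M ^ (k + 1)) R)
    (hR' : IsRun {q ∈ S | k + 1 ≤ q.2} (M ^ (k + 1)) R') (hne : R ≠ R') :
    cluLT (runClu Γ k R).1 (runClu Γ k R').1 ∨ cluLT (runClu Γ k R').1 (runClu Γ k R).1 := by
  obtain ⟨F, hF, hspans, -⟩ := hΓ.exists_witness_runClu hS hR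
  obtain ⟨F', hF', hspans', -⟩ := hΓ.exists_witness_runClu hS hR'
  refine (hR.cluLT_or_cluLT hR' (hS.toIsOrdered.mono (sep_subset _ _)) hne).imp
    (fun h => ?_) fun h => ?_
  · exact (h.spanI (hspans.sSup_mem hF.nonempty) (hspans'.sInf_mem hF'.nonempty)).mono
      inter_subset_left inter_subset_left
  · exact (h.spanI (hspans'.sSup_mem hF'.nonempty) (hspans.sInf_mem hF.nonempty)).mono
      inter_subset_left inter_subset_left

lemma IsTame.runClu_cluLT_or_cluLT_of_disjoint (hΓ : IsTame M Γ) (hS : IsWitnessed M Γ S)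
    (hR : IsRun {q ∈ S | k + 1 ≤ q.2} (M ^ (k + 1)) R) {c : Clu} (hc : c ∈ S)
    (hd : Disjoint c.1 (spanI (⋃ q ∈ R, q.1))) :
    cluLT (runClu Γ k R).1 c.1 ∨ cluLT c.1 (runClu Γ k R).1 := by
  obtain ⟨F, hF, hspans, -⟩ := hΓ.exists_witness_runClu hS hR
  exact (hS.cluLT_or_cluLT_of_disjoint_spanI (fun q hq => (hR.subset hq).1)
    (hspans.sInf_mem hF.nonempty) (hspans.sSup_mem hF.nonempty) hc hd).imp
    (fun h => h.mono inter_subset_left subset_rfl) fun h => h.mono subset_rfl inter_subset_left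

lemma IsTame.spans_runClu (hΓ : IsTame M Γ) (hS : IsWitnessed M Γ S)
    (hR : IsRun {q ∈ S | k + 1 ≤ q.2} (M ^ (k + 1)) R) :
    ∃ F, Witness M (runClu Γ k R).2 F ∧ Spans F (runClu Γ k R).1 := by
  obtain ⟨F, hF, hspans, -⟩ := hΓ.exists_witness_runClu hS hR
  exact ⟨F, hF, hspans.spanI_inter hF.nonempty
    (iUnion₂_subset fun c hc => hS.subset c (hR.subset hc).1)⟩

lemma IsTame.isWitnessed_nextPart (hΓ : IsTame M Γ) (hS : IsWitnessed M Γ S) :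
    IsWitnessed M Γ (nextPart Γ M k S) where
  nonempty := by
    rintro c (⟨R, hR, rfl⟩ | ⟨hc, -⟩)
    · obtain ⟨F, hF, hspans⟩ := hΓ.spans_runClu hS hR
      exact hspans.nonempty hF.nonempty
    · exact hS.nonempty c hc
  comparable := by
    rintro c (⟨R, hR, rfl⟩ | ⟨hc, hc'⟩) d (⟨R', hR', rfl⟩ | ⟨hd, hd'⟩) hne
    · exact hΓ.runClu_cluLT_or_cluLT hS hR hR' fun h => hne (congrArg (runClu Γ k) h)
    · exact hΓ.runClu_cluLT_or_cluLT_of_disjoint hS hR hd (hd' R hR)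
    · exact (hΓ.runClu_cluLT_or_cluLT_of_disjoint hS hR' hc (hc' R' hR')).symm
    · exact hS.comparable hc hd hne
  subset := by
    rintro c (⟨R, -, rfl⟩ | ⟨hc, -⟩)
    · exact inter_subset_right
    · exact hS.subset c hc
  exists_witness := by
    rintro c (⟨R, hR, rfl⟩ | ⟨hc, -⟩)
    · exact hΓ.spans_runClu hS hR
    · exact hS.exists_witness c hc

lemma isWitnessed_parts_zero : IsWitnessed M Γ (parts Γ M 0) where
  nonempty := by
    rintro _ ⟨x, -, rfl⟩
    exact singleton_nonempty x
  comparable := by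
    rintro _ ⟨x, -, rfl⟩ _ ⟨y, -, rfl⟩ hne
    have hxy : x ≠ y := fun h => hne (by rw [h])
    simpa [cluLT] using lt_or_gt_of_ne hxy
  subset := by
    rintro _ ⟨x, hx, rfl⟩
    exact singleton_subset_iff.2 hx
  exists_witness := by
    rintro _ ⟨x, -, rfl⟩
    exact ⟨{x}, .singleton x, spans_singleton x⟩

lemma IsTame.isWitnessed_parts (hΓ : IsTame M Γ) : ∀ k, IsWitnessed M Γ (parts Γ M k)
  | 0 => isWitnessed_parts_zero
  | k + 1 => hΓ.isWitnessed_nextPart (hΓ.isWitnessed_parts k)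

lemma IsTame.kappaFinite (hΓ : IsTame M Γ) (x : ℕ) : KappaFinite Γ M x := by
  obtain ⟨N, hN⟩ := eventually_atTop.1 (hΓ x)
  refine ⟨N, ?_⟩
  rintro (_ | j) ⟨c, ⟨hc, hnew⟩, hx⟩
  · exact N.zero_le
  by_contra! hj
  have hparts := hΓ.isWitnessed_parts j
  rcases hc with ⟨R, hR, rfl⟩ | ⟨hc, -⟩
  · obtain ⟨-, -, -, hmass⟩ := hΓ.exists_witness_runClu hparts hR
    obtain ⟨F, hF, hspans⟩ := hΓ.spans_runClu hparts hR
    exact hN _ (by omega) F hF (hspans.1.trans inter_subset_right) (hspans.2 hx)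
  · exact hnew j (Nat.lt_succ_self j) hc

end

/-! ### The grouping construction of a random set -/

theorem statement_12_general {Ω : Type*} [MeasurableSpace Ω] {μ : Measure Ω} {Γ : Ω → Set ℕ}
    {M : ℕ} (hM : M ≠ 0) {q : ℝ≥0∞} (hq : 32 * M ^ 2 * q ≤ 1)
    (hΓ : ∀ F : Finset ℕ, μ {ω | ↑F ⊆ Γ ω} ≤ q ^ F.card) :
    ∀ᵐ ω ∂μ, ∀ x, KappaFinite (Γ ω) M x :=
  (ae_isTame hM hq hΓ).mono fun _ h => h.kappaFinite

lemma IsBernoulliProduct.measure_subset_Gamma_le {μ : Measure (ℕ → Bool)} {p : ℝ}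
    (hμ : IsBernoulliProduct μ p) (F : Finset ℕ) :
    μ {ξ | ↑F ⊆ Gamma ξ} ≤ ENNReal.ofReal p ^ F.card := by
  by_cases h0 : 0 ∈ F
  · have hempty : {ξ | ↑F ⊆ Gamma ξ} = ∅ :=
      eq_empty_of_forall_notMem fun ξ hξ => Nat.not_succ_le_zero 0 (hξ h0).1
    rw [hempty, measure_empty]
    exact zero_le
  · have hinj : InjOn Nat.pred (F : Set ℕ) := fun a ha b hb =>
      Nat.pred_inj (Nat.pos_of_ne_zero (ne_of_mem_of_not_mem ha h0))
        (Nat.pos_of_ne_zero (ne_of_mem_of_not_mem hb h0))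
    have hcyl := hμ.2 (F.image Nat.pred) fun _ => true
    simp only [if_true, Finset.prod_const, Finset.card_image_of_injOn hinj] at hcyl
    rw [← hcyl]
    exact measure_mono fun ξ hξ => Finset.forall_mem_image.2 fun n hn => (hξ hn).2

lemma mul_sq_mul_ofReal_le_one {M : ℕ} (hM : M ≠ 0) {p : ℝ} (hp : 0 < p)
    (hpM : (M : ℝ) < (64 * p) ^ (-(1 / 2) : ℝ)) : 32 * M ^ 2 * ENNReal.ofReal p ≤ 1 := by
  have hM0 : (0 : ℝ) < M := by positivity
  have h64 : 64 * p < (M : ℝ) ^ (-2 : ℝ) := by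
    rw [← Real.lt_rpow_inv_iff_of_neg hM0 (by positivity) (by norm_num)]
    convert hpM using 2
    norm_num
  have hreal : 32 * M ^ 2 * p ≤ 1 := by
    rw [Real.rpow_neg hM0.le, Real.rpow_two, lt_inv_comm₀ (by positivity) (by positivity),
      ← one_div, lt_div_iff₀ (by positivity)] at h64
    linarith [mul_pos (pow_pos hM0 2) hp]
  calc 32 * (M : ℝ≥0∞) ^ 2 * ENNReal.ofReal p = ENNReal.ofReal (32 * M ^ 2 * p) := by
        rw [ENNReal.ofReal_mul (by positivity), ENNReal.ofReal_mul (by positivity),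
          ENNReal.ofReal_pow hM0.le, ENNReal.ofReal_natCast, ENNReal.ofReal_ofNat]
    _ ≤ 1 := ENNReal.ofReal_le_one.2 hreal

theorem statement_12 (M : ℕ) (hM : 3 ≤ M) (p : ℝ) (hp : 0 < p)
    (hpM : (M : ℝ) < (64 * p) ^ (-(1 / 2) : ℝ))
    (μ : Measure (ℕ → Bool)) (hμ : IsBernoulliProduct μ p) :
    μ {ξ | ∀ x ∈ Gamma ξ, KappaFinite (Gamma ξ) M x} = 1 := by
  have := hμ.1
  have hM0 : M ≠ 0 := by omega
  have hae : ∀ᵐ ξ ∂μ, ∀ x, KappaFinite (Gamma ξ) M x :=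
    statement_12_general hM0 (mul_sq_mul_ofReal_le_one hM0 hp hpM) hμ.measure_subset_Gamma_le
  exact (measure_congr (eventuallyEq_univ.2 (hae.mono fun _ h x _ => h x))).trans measure_univ

end Paper
end
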